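/- arXiv:math-ph/9905008 — 2 statements merged into one kernel-verified Lean document; each statement's English description precedes it below -/
import Mathlib

section
/- For every λ ∈ ℝ \ {0}, every irrational α ∈ (0,1), all θ, θ' ∈ [0,1), and every E in the spectrum of the operator H_{λ,α,θ'}, the limit lim_{n→∞} (1/n)·ln‖M(λ,E,v_{α,θ}^n)‖ exists and equals 0. -/
open scoped Classical

noncomputable section

/-- The Sturmian potential `v_{α,θ}(n) = χ_{[1-α,1)}(nα + θ mod 1)`. -/
def sturmian (α θ : ℝ) (n : ℤ) : ℝ :=
  if Int.fract (n * α + θ) ∈ Set.Ico (1 - α) 1 then 1 else 0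

/-- Iterates of the Gauss map, starting at `α`. -/
def cfGauss (α : ℝ) : ℕ → ℝ
  | 0 => α
  | n + 1 => Int.fract (cfGauss α n)⁻¹

/-- The continued fraction coefficients `a_n` of `α = [a_1, a_2, …]` (for `n ≥ 1`):
`a_1 = ⌊1/α⌋`, `a_2 = ⌊1/fract(1/α)⌋`, … . -/
def cfCoeff (α : ℝ) (n : ℕ) : ℕ := ⌊(cfGauss α (n - 1))⁻¹⌋₊

/-- The standard words, with an index shift: `sWord a n` is `s_{n-1}`.  Thus
`sWord a 0 = s_{-1} = 1`, `sWord a 1 = s_0 = 0`, `sWord a 2 = s_1 = 0^{a_1 - 1} 1`, and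
`sWord a (n+1) = s_n = s_{n-1}^{a_n} s_{n-2}` for `n ≥ 2`. -/
def sWord (a : ℕ → ℕ) : ℕ → List ℝ
  | 0 => [1]
  | 1 => [0]
  | 2 => List.replicate (a 1 - 1) (0 : ℝ) ++ [1]
  | n + 3 => (List.replicate (a (n + 2)) (sWord a (n + 2))).flatten ++ sWord a (n + 1)

/-- The `n`-th letter (for `n ≥ 1`) of the one-sided infinite word `c_α = lim s_n`:
since `|s_n| ≥ n`, it is the `n`-th letter of `s_n`. -/
def cword (α : ℝ) (n : ℕ) : ℝ := (sWord (cfCoeff α) (n + 1)).getD (n - 1) 0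

/-- `w` is a (finite) prefix of the one-sided infinite word `c_α`. -/
def IsPrefC (α : ℝ) (w : List ℝ) : Prop :=
  w = (List.range w.length).map fun i => cword α (i + 1)

/-- The one-step transfer matrix `T(λ,E,a) = [[E - λa, -1], [1, 0]]`. -/
def transferT (lam : ℝ) (E : ℂ) (a : ℝ) : Matrix (Fin 2) (Fin 2) ℂ :=
  !![E - lam * a, -1; 1, 0]

/-- The transfer matrix over a word `w = w_1 … w_n`:
`M(λ,E,w) = T(λ,E,w_n) ⋯ T(λ,E,w_1)`. -/
def transferM (lam : ℝ) (E : ℂ) : List ℝ → Matrix (Fin 2) (Fin 2) ℂ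
  | [] => 1
  | a :: w => transferM lam E w * transferT lam E a

/-- The operator norm on `ℂ²` (with the euclidean norm) of a `2 × 2` complex matrix. -/
def opNorm (A : Matrix (Fin 2) (Fin 2) ℂ) : ℝ :=
  ‖Matrix.toEuclideanCLM (𝕜 := ℂ) A‖

/-- The word `v_{α,θ}^n = v_{α,θ}(1) … v_{α,θ}(n)`. -/
def sturmianWord (α θ : ℝ) (n : ℕ) : List ℝ :=
  (List.range n).map fun k => sturmian α θ (k + 1)

/-- The set of finite nonempty subwords of a two-sided sequence `v : ℤ → ℝ`. -/
def SubZ (v : ℤ → ℝ) : Set (List ℝ) :=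
  {w | w ≠ [] ∧ ∃ k : ℤ, w = (List.range w.length).map fun i => v (k + i)}

/-- The set of finite nonempty subwords of the one-sided word `c_α` (indexed from `1`). -/
def SubC (α : ℝ) : Set (List ℝ) :=
  {w | w ≠ [] ∧ ∃ k : ℕ, 1 ≤ k ∧ w = (List.range w.length).map fun i => cword α (k + i)}

/-- `W_α`, the set of all finite nonempty subwords of the sequences `v_{α,θ}`, `θ ∈ [0,1)`. -/
def Walpha (α : ℝ) : Set (List ℝ) :=
  {w | ∃ θ ∈ Set.Ico (0 : ℝ) 1, w ∈ SubZ (sturmian α θ)}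

/-- `α` is a bounded density number: `limsup_{n→∞} (1/n) ∑_{j=1}^n a_j < ∞` for the
continued fraction coefficients `a_j` of `α`. -/
def BoundedDensity (α : ℝ) : Prop :=
  Filter.IsBoundedUnder (· ≤ ·) Filter.atTop
    (fun n : ℕ => (1 / n : ℝ) * ∑ j ∈ Finset.Icc 1 n, (cfCoeff α j : ℝ))

end

/-!
The functions `Φ x n = log ‖M(λ, E, v_{α,x}^n)‖` form a nonnegative subadditive cocycle over the
rotation by `α`, so `sup_x Φ x n` has a growth rate `γ ≥ 0`, and it suffices to show `γ = 0`.

Sturmian words are linearly recurrent along the best-approximation times `n`: every stretch of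
length about `4 n` contains every factor of length `n`. If `γ > 0`, a stretch realising the rate `γ`
forces `Φ x n` to be nearly `γ n` for every `x`, while each half of the factor carries at most about
`γ n / 2`. So every transfer matrix over `n` steps is at least four times as large as the matrices
of its two halves. As these have determinant one, an approximate solution of `H u = E u` is then
dominated at each site by its values half a factor to the left and to the right, up to `(H - E) u`.
Summing squares gives `‖u‖ ≤ C ‖(H - E) u‖`, and as `H` is self-adjoint, `E` lies outside the
spectrum.
-/


open Filter Set Topology

/-! ### Subadditive cocycles -/

/-- A nonnegative subadditive cocycle over `T`, bounded at each time; the model case is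
`Φ x n = log ‖A (T^[n - 1] x) ⋯ A x‖` for a bounded `A` with values in matrices of determinant
one. -/
structure IsSubadditiveCocycle {X : Type*} (T : X → X) (Φ : X → ℕ → ℝ) : Prop where
  nonneg : ∀ x n, 0 ≤ Φ x n
  bddAbove : ∀ n, BddAbove (range fun x => Φ x n)
  add_le : ∀ x m n, Φ x (m + n) ≤ Φ x m + Φ (T^[m] x) n

lemma exists_forall_le_mul_add_of_tendsto_div {g : ℕ → ℝ} {γ γ' : ℝ}
    (hg : Tendsto (fun n : ℕ => g n / n) atTop (𝓝 γ)) (hγ : γ < γ') :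
    ∃ C, ∀ n, g n ≤ γ' * n + C := by
  have hev : ∀ᶠ n : ℕ in atTop, g n - γ' * n ≤ 0 := by
    filter_upwards [hg.eventually_lt_const hγ, eventually_gt_atTop 0] with n hn hpos
    have := (div_lt_iff₀ (by exact_mod_cast hpos)).mp hn
    linarith
  obtain ⟨C, hC⟩ := (isBoundedUnder_of_eventually_le hev).bddAbove_range
  exact ⟨C, fun n => by linarith [hC ⟨n, rfl⟩]⟩

namespace IsSubadditiveCocycle

variable {X : Type*} {T : X → X} {Φ : X → ℕ → ℝ}

lemma le_iSup (hΦ : IsSubadditiveCocycle T Φ) (x : X) (n : ℕ) : Φ x n ≤ ⨆ y, Φ y n :=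
  le_ciSup (hΦ.bddAbove n) x

lemma iSup_div_nonneg (hΦ : IsSubadditiveCocycle T Φ) (n : ℕ) : 0 ≤ (⨆ x, Φ x n) / n :=
  div_nonneg (Real.iSup_nonneg fun x => hΦ.nonneg x n) n.cast_nonneg

lemma bddBelow_iSup_div (hΦ : IsSubadditiveCocycle T Φ) :
    BddBelow (range fun n : ℕ => (⨆ x, Φ x n) / n) :=
  ⟨0, forall_mem_range.mpr hΦ.iSup_div_nonneg⟩

variable [Nonempty X]

lemma subadditive_iSup (hΦ : IsSubadditiveCocycle T Φ) : Subadditive fun n => ⨆ x, Φ x n :=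
  fun m n => ciSup_le fun x =>
    (hΦ.add_le x m n).trans (add_le_add (hΦ.le_iSup x m) (hΦ.le_iSup _ n))

/-- The uniform growth rate of a subadditive cocycle: the limit of `(⨆ x, Φ x n) / n`, which exists
by Fekete's lemma. -/
noncomputable def uniformRate (hΦ : IsSubadditiveCocycle T Φ) : ℝ := hΦ.subadditive_iSup.lim

lemma tendsto_iSup_div (hΦ : IsSubadditiveCocycle T Φ) :
    Tendsto (fun n : ℕ => (⨆ x, Φ x n) / n) atTop (𝓝 hΦ.uniformRate) :=
  hΦ.subadditive_iSup.tendsto_lim hΦ.bddBelow_iSup_div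

lemma uniformRate_nonneg (hΦ : IsSubadditiveCocycle T Φ) : 0 ≤ hΦ.uniformRate :=
  ge_of_tendsto' hΦ.tendsto_iSup_div hΦ.iSup_div_nonneg

lemma uniformRate_mul_le_iSup (hΦ : IsSubadditiveCocycle T Φ) (n : ℕ) :
    hΦ.uniformRate * n ≤ ⨆ x, Φ x n := by
  rcases n.eq_zero_or_pos with rfl | hn
  · simpa using Real.iSup_nonneg fun x => hΦ.nonneg x 0
  · exact (le_div_iff₀ (by exact_mod_cast hn)).mp
      (hΦ.subadditive_iSup.lim_le_div hΦ.bddBelow_iSup_div (Nat.ne_of_gt hn))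

/-- An orbit segment of length `(R + 1) * n` realising the uniform rate can be cut into three pieces
of which the middle one carries the value `Φ x n`. -/
lemma uniformRate_mul_sub_le_of_recurrent {γ' C : ℝ} (hΦ : IsSubadditiveCocycle T Φ)
    (hC : ∀ y k, Φ y k ≤ γ' * k + C) {R n : ℕ} {x : X}
    (hrec : ∀ y, ∃ j ≤ R * n, Φ (T^[j] y) n = Φ x n) :
    hΦ.uniformRate * ((R + 1) * n) - γ' * (R * n) - 2 * C ≤ Φ x n := by
  have hsup : ⨆ y, Φ y ((R + 1) * n) ≤ γ' * (R * n) + 2 * C + Φ x n := by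
    refine ciSup_le fun y => ?_
    obtain ⟨j, hj, hval⟩ := hrec y
    obtain ⟨r, hr⟩ := Nat.exists_eq_add_of_le hj
    have hlen : (R + 1) * n = j + (n + r) := by lia
    have hcut := hΦ.add_le y j (n + r)
    have hcut' := hΦ.add_le (T^[j] y) n r
    have hr' : (R : ℝ) * n = j + r := by exact_mod_cast hr
    rw [hlen, hr']
    linarith [hC y j, hC (T^[n] (T^[j] y)) r]
  have hlow := hΦ.uniformRate_mul_le_iSup ((R + 1) * n)
  push_cast at hlow
  linarith

lemma exists_half_gap_of_recurrent (hΦ : IsSubadditiveCocycle T Φ) (hpos : 0 < hΦ.uniformRate)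
    {R : ℕ} (hrec : ∃ᶠ n in atTop, ∀ x y, ∃ j ≤ R * n, Φ (T^[j] y) n = Φ x n) (c : ℝ) :
    ∃ n, ∀ k, 2 * k ≤ n + 1 → ∀ x y, Φ y k + c ≤ Φ x n := by
  set γ := hΦ.uniformRate
  set ε : ℝ := γ / (4 * (R + 1))
  have hεpos : 0 < ε := by positivity
  have hεR : ε * (4 * (R + 1)) = γ := div_mul_cancel₀ _ (by positivity)
  obtain ⟨C, hC⟩ :=
    exists_forall_le_mul_add_of_tendsto_div hΦ.tendsto_iSup_div (lt_add_of_pos_right γ hεpos)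
  have hupper (y : X) (k : ℕ) : Φ y k ≤ (γ + ε) * k + C := (hΦ.le_iSup y k).trans (hC k)
  have hlarge : ∀ᶠ n : ℕ in atTop, 3 * C + c + γ ≤ γ / 8 * n :=
    (tendsto_natCast_atTop_atTop.const_mul_atTop (by positivity)).eventually_ge_atTop _
  obtain ⟨n, hn, hnlarge⟩ := (hrec.and_eventually hlarge).exists
  refine ⟨n, fun k hk x y => ?_⟩
  have hlower : 3 / 4 * γ * n - 2 * C ≤ Φ x n := by
    have := hΦ.uniformRate_mul_sub_le_of_recurrent hupper (hn x)
    nlinarith [mul_nonneg hεpos.le (Nat.cast_nonneg (α := ℝ) n)]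
  have hhalf : (γ + ε) * k ≤ 5 / 4 * γ * ((n + 1) / 2) := by
    have : (2 * k : ℝ) ≤ n + 1 := by exact_mod_cast hk
    gcongr
    · nlinarith
    · linarith
  linarith [hupper y k]

/-- Two halves of a long recurrent word are each much smaller than the whole, because recurrence
makes the growth of `Φ` along it uniform in the base point. -/
theorem tendsto_zero_or_exists_gap (hΦ : IsSubadditiveCocycle T Φ) {R : ℕ}
    (hrec : ∃ᶠ n in atTop, ∀ x y, ∃ j ≤ R * n, Φ (T^[j] y) n = Φ x n) (c : ℝ) :
    Tendsto (fun n : ℕ => (⨆ x, Φ x n) / n) atTop (𝓝 0) ∨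
      ∃ N₁ N₂, ∀ x, Φ x N₁ + c ≤ Φ x (N₁ + N₂) ∧ Φ (T^[N₁] x) N₂ + c ≤ Φ x (N₁ + N₂) := by
  rcases hΦ.uniformRate_nonneg.eq_or_lt with hzero | hpos
  · exact .inl (hzero ▸ hΦ.tendsto_iSup_div)
  · obtain ⟨n, hn⟩ := hΦ.exists_half_gap_of_recurrent hpos hrec c
    have hsplit : n / 2 + (n - n / 2) = n := by lia
    refine .inr ⟨n / 2, n - n / 2, fun x => ?_⟩
    rw [hsplit]
    exact ⟨hn _ (by lia) _ _, hn _ (by lia) _ _⟩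

end IsSubadditiveCocycle

/-! ### Best approximations and recurrence of Sturmian words -/

lemma exists_consecutive_bestApprox {α : ℝ} (hα : Irrational α) (N : ℕ) :
    ∃ q' q : ℕ, 0 < q' ∧ q' < q ∧ N < q ∧
      |q * α - round (q * α)| < |q' * α - round (q' * α)| ∧
      ∀ k : ℕ, 0 < k → k < q → ∀ i : ℤ, |q' * α - round (q' * α)| ≤ |k * α - i| := by
  set d : ℕ → ℝ := fun k => |k * α - round (k * α)|
  obtain ⟨q', hq', hq'_min⟩ := (Finset.Icc 1 (N + 1)).exists_min_image d ⟨1, by simp⟩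
  rw [Finset.mem_Icc] at hq'
  have hcloser : ∃ k : ℕ, 0 < k ∧ d k < d q' := by
    have hd : 0 < d q' := abs_pos.mpr (sub_ne_zero.mpr ((hα.natCast_mul (by lia)).ne_int _))
    obtain ⟨n, hn⟩ := exists_nat_one_div_lt hd
    obtain ⟨k, hk, -, hkn⟩ := Real.exists_nat_abs_mul_sub_round_le α n.succ_pos
    refine ⟨k, hk, hkn.trans_lt (lt_of_le_of_lt ?_ hn)⟩
    push_cast
    gcongr
    linarith
  have hfind := Nat.find_spec hcloser
  have hlt : N + 1 < Nat.find hcloser := by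
    by_contra h
    exact hfind.2.not_ge (hq'_min _ (Finset.mem_Icc.mpr (by lia)))
  refine ⟨q', Nat.find hcloser, by lia, by lia, by lia, hfind.2, fun k hk hkq i => ?_⟩
  exact (not_lt.mp fun h => Nat.find_min hcloser hkq ⟨hk, h⟩).trans (round_le _ i)

/-- Consecutive best approximations err on opposite sides. -/
lemma exists_bestApprox_pair {α : ℝ} (hα : Irrational α) (N : ℕ) :
    ∃ m m' : ℕ, ∃ p p' : ℤ, N < max m m' ∧ 0 < m * α - p ∧ m' * α - p' < 0 ∧
      ∀ k : ℕ, 0 < k → k < max m m' → ∀ i : ℤ,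
        max (m * α - p) (p' - m' * α) ≤ |k * α - i| := by
  obtain ⟨q', q, hq', hq'q, hNq, hq_lt, hbest⟩ := exists_consecutive_bestApprox hα N
  set d' := q' * α - round (q' * α)
  set d := q * α - round (q * α)
  -- If the two errors had the same sign, `q - q'` would be a better approximation than `q'`.
  have hsign : d * d' < 0 := by
    have hd : 0 < |d| := abs_pos.mpr (sub_ne_zero.mpr ((hα.natCast_mul (by lia)).ne_int _))
    have hdiff : |d'| ≤ |d - d'| := by
      convert hbest (q - q') (by lia) (by lia) (round (q * α) - round (q' * α)) using 2
      rw [Nat.cast_sub hq'q.le]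
      push_cast
      ring
    have hsq := sq_le_sq.mpr hdiff
    have hmul : |d| * |d| < |d| * |d'| := mul_lt_mul_of_pos_left hq_lt hd
    rw [abs_mul_abs_self, ← abs_mul] at hmul
    rcases abs_cases (d * d') with h | h <;> nlinarith
  rcases mul_neg_iff.mp hsign with ⟨hpos, hneg⟩ | ⟨hneg, hpos⟩
  · refine ⟨q, q', _, _, by lia, hpos, hneg, fun k hk hkq i => ?_⟩
    rw [abs_of_pos hpos, abs_of_neg hneg] at hq_lt
    rw [abs_of_neg hneg] at hbest
    exact (max_le (by linarith) (by linarith)).trans (hbest k hk (by lia) i)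
  · refine ⟨q', q, _, _, by lia, hpos, hneg, fun k hk hkq i => ?_⟩
    rw [abs_of_neg hneg, abs_of_pos hpos] at hq_lt
    rw [abs_of_pos hpos] at hbest
    exact (max_le (by linarith) (by linarith)).trans (hbest k hk (by lia) i)

/-- The orbit point just below `b` can be moved up, by `m` steps forward or `m'` steps back, without
leaving the first `m + m'` orbit points; since the move is at most `b - a`, the point lies above
`a`. -/
lemma exists_add_mul_add_mem_Ico {α a b : ℝ} {m m' : ℕ} {p p' : ℤ} (hm : 0 < m * α - p)
    (hm' : m' * α - p' < 0) (hpos : 0 < m + m') (hab : m * α - p ≤ b - a)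
    (hab' : p' - m' * α ≤ b - a) (y : ℝ) :
    ∃ j < m + m', ∃ i : ℤ, y + j * α + i ∈ Ico a b := by
  set z : ℕ → ℝ := fun j => y + j * α + (⌈b - (y + j * α)⌉ - 1 : ℤ) with hz
  have hz_lt (j : ℕ) : z j < b := by
    have := Int.ceil_lt_add_one (b - (y + j * α))
    simp only [hz]
    push_cast
    linarith
  have hz_max (j : ℕ) (i : ℤ) (h : y + j * α + i < b) : y + j * α + i ≤ z j := by
    have : i ≤ ⌈b - (y + j * α)⌉ - 1 := Int.le_sub_one_of_lt (Int.lt_ceil.mpr (by linarith))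
    simp only [hz]
    gcongr
  obtain ⟨j, hj, hj_max⟩ := (Finset.range (m + m')).exists_max_image z ⟨0, by simpa using hpos⟩
  rw [Finset.mem_range] at hj
  have hnext {k : ℕ} (hk : k < m + m') {i : ℤ} (h : z j < y + k * α + i) : b ≤ y + k * α + i := by
    by_contra! hlt
    exact ((hz_max k i hlt).trans (hj_max k (by simpa using hk))).not_gt h
  refine ⟨j, hj, _, ?_, hz_lt j⟩
  obtain ⟨i, hzj⟩ : ∃ i : ℤ, z j = y + j * α + i := ⟨_, rfl⟩
  change a ≤ z j
  rcases lt_or_ge j m' with hjm | hjm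
  · have hmove : y + (j + m : ℕ) * α + (i - p : ℤ) = z j + (m * α - p) := by
      rw [hzj]
      push_cast
      ring
    have := hnext (k := j + m) (i := i - p) (by lia) (by linarith)
    linarith
  · have hmove : y + (j - m' : ℕ) * α + (i + p' : ℤ) = z j + (p' - m' * α) := by
      rw [hzj, Nat.cast_sub hjm]
      push_cast
      ring
    have := hnext (k := j - m') (i := i + p') (by lia) (by linarith)
    linarith

lemma exists_Ico_floor_add_mul_eq {α L : ℝ} {q : ℕ} (hq : 0 < q) (hL : L ≤ 1)
    (hsep : ∀ k : ℕ, 0 < k → k < q → ∀ i : ℤ, L ≤ |k * α - i|) (x : ℝ) :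
    ∃ a b, L ≤ b - a ∧ ∀ z ∈ Ico a b, ∀ k ∈ Icc 1 q, ⌊z + k * α⌋ = ⌊x + k * α⌋ := by
  have hne : (Finset.Icc 1 q).Nonempty := Finset.nonempty_Icc.mpr hq
  obtain ⟨k₁, hk₁, hmax⟩ :=
    (Finset.Icc 1 q).exists_max_image (fun k : ℕ => (⌊x + k * α⌋ : ℝ) - k * α) hne
  obtain ⟨k₂, hk₂, hmin⟩ :=
    (Finset.Icc 1 q).exists_min_image (fun k : ℕ => (⌊x + k * α⌋ : ℝ) + 1 - k * α) hne
  rw [Finset.mem_Icc] at hk₁ hk₂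
  refine ⟨⌊x + k₁ * α⌋ - k₁ * α, ⌊x + k₂ * α⌋ + 1 - k₂ * α, ?_, fun z hz k hk => ?_⟩
  · have hax := Int.floor_le (x + k₁ * α)
    have hxb := Int.lt_floor_add_one (x + k₂ * α)
    rcases lt_trichotomy k₁ k₂ with h | rfl | h
    · have := hsep (k₂ - k₁) (by lia) (by lia) (⌊x + k₂ * α⌋ + 1 - ⌊x + k₁ * α⌋)
      rw [Nat.cast_sub h.le, abs_sub_comm] at this
      push_cast at this
      rw [abs_of_nonneg] at this <;> linarith
    · linarith
    · have := hsep (k₁ - k₂) (by lia) (by lia) (⌊x + k₁ * α⌋ - ⌊x + k₂ * α⌋ - 1)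
      rw [Nat.cast_sub h.le] at this
      push_cast at this
      rw [abs_of_nonneg] at this <;> linarith
  · have hk' : k ∈ Finset.Icc 1 q := Finset.mem_Icc.mpr hk
    rw [Int.floor_eq_iff]
    constructor <;> linarith [hz.1, hz.2, hmax k hk', hmin k hk']

lemma sturmian_eq_floor_sub_floor {α : ℝ} (hα : α ∈ Ioo (0 : ℝ) 1) (x : ℝ) (n : ℤ) :
    sturmian α x n = ⌊x + (n + 1) * α⌋ - ⌊x + n * α⌋ := by
  obtain ⟨h0, h1⟩ := hα
  have hnext : x + ((n : ℝ) + 1) * α = n * α + x + α := by ring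
  rw [hnext, add_comm x]
  unfold sturmian
  generalize (n : ℝ) * α + x = y
  have hy := Int.fract_add_floor y
  have hy0 := Int.fract_nonneg y
  have hy1 := Int.fract_lt_one y
  split_ifs with h
  · have : ⌊y + α⌋ = ⌊y⌋ + 1 := by
      rw [Int.floor_eq_iff]
      push_cast
      constructor <;> linarith [h.1]
    simp [this]
  · have hlt : Int.fract y < 1 - α := not_le.mp fun hle => h ⟨hle, hy1⟩
    have : ⌊y + α⌋ = ⌊y⌋ := by
      rw [Int.floor_eq_iff]
      constructor <;> linarith
    simp [this]

/-- The word `v (k + 1) … v (k + n)`. -/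
def subword (v : ℤ → ℝ) (k : ℤ) (n : ℕ) : List ℝ :=
  (List.range n).map fun i : ℕ => v (k + i + 1)

lemma subword_add (v : ℤ → ℝ) (k : ℤ) (m n : ℕ) :
    subword v k (m + n) = subword v k m ++ subword v (k + m) n := by
  simp [subword, List.range_add, add_assoc]

lemma subword_one (v : ℤ → ℝ) (k : ℤ) : subword v k 1 = [v (k + 1)] := by
  simp [subword]

lemma sturmianWord_add_mul (α x : ℝ) (k : ℤ) (n : ℕ) :
    sturmianWord α (x + k * α) n = subword (sturmian α x) k n := by
  simp only [sturmianWord, subword, List.bind_eq_flatMap, List.pure_def,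
    ← List.map_eq_flatMap, List.map_map]
  refine List.map_congr_left fun i _ => ?_
  have harg : ((i : ℤ) + 1 : ℤ) * α + (x + k * α) = (k + i + 1 : ℤ) * α + x := by
    push_cast
    ring
  exact congrArg (fun y => if Int.fract y ∈ Ico (1 - α) 1 then 1 else 0) harg

lemma sturmianWord_eq_subword (α x : ℝ) (n : ℕ) :
    sturmianWord α x n = subword (sturmian α x) 0 n := by
  simpa using sturmianWord_add_mul α x 0 n

lemma sturmian_add_intCast (α x : ℝ) (i n : ℤ) : sturmian α (x + i) n = sturmian α x n := by
  simp [sturmian, ← add_assoc]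

lemma sturmianWord_add_intCast (α x : ℝ) (i : ℤ) (n : ℕ) :
    sturmianWord α (x + i) n = sturmianWord α x n := by
  simp only [sturmianWord_eq_subword, subword, sturmian_add_intCast]

lemma sturmianWord_eq_of_floor_eq {α x y : ℝ} (hα : α ∈ Ioo (0 : ℝ) 1) {n : ℕ}
    (h : ∀ k ∈ Icc 1 (n + 1), ⌊x + k * α⌋ = ⌊y + k * α⌋) :
    sturmianWord α x n = sturmianWord α y n := by
  simp only [sturmianWord_eq_subword, subword]
  refine List.map_congr_left fun k hk => ?_
  rw [List.mem_range] at hk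
  have hk₁ := h (k + 1) ⟨by lia, by lia⟩
  have hk₂ := h (k + 1 + 1) ⟨by lia, by lia⟩
  push_cast at hk₁ hk₂
  simp [sturmian_eq_floor_sub_floor hα, hk₁, hk₂]

theorem frequently_sturmianWord_recurrent {α : ℝ} (hirr : Irrational α)
    (hα : α ∈ Ioo (0 : ℝ) 1) :
    ∃ᶠ n : ℕ in atTop, ∀ x y : ℝ,
      ∃ j : ℕ, j ≤ 3 * n ∧ sturmianWord α (y + j * α) n = sturmianWord α x n := by
  refine frequently_atTop.mpr fun N => ?_
  obtain ⟨m, m', p, p', hN, hm, hm', hsep⟩ := exists_bestApprox_pair hirr (N + 1)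
  refine ⟨max m m' - 1, by lia, fun x y => ?_⟩
  have hle_one : max (m * α - p) (p' - m' * α) ≤ 1 := by
    refine (hsep 1 one_pos (by lia) ⌊α⌋).trans ?_
    rw [Nat.cast_one, one_mul, Int.self_sub_floor, Int.abs_fract]
    exact (Int.fract_lt_one α).le
  obtain ⟨a, b, hab, hfloor⟩ := exists_Ico_floor_add_mul_eq (by lia) hle_one hsep x
  obtain ⟨j, hj, i, hmem⟩ := exists_add_mul_add_mem_Ico hm hm' (by lia)
    ((le_max_left _ _).trans hab) ((le_max_right _ _).trans hab) y
  refine ⟨j, by lia, ?_⟩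
  rw [← sturmianWord_add_intCast α _ i]
  refine sturmianWord_eq_of_floor_eq hα fun k hk => hfloor _ hmem k ?_
  rwa [Nat.sub_add_cancel (by lia)] at hk

/-! ### Matrices acting on `ℂ²` -/

local notation "toCLM" => Matrix.toEuclideanCLM (n := Fin 2) (𝕜 := ℂ)

open scoped InnerProductSpace

lemma opNorm_nonneg (A : Matrix (Fin 2) (Fin 2) ℂ) : 0 ≤ opNorm A :=
  norm_nonneg _

lemma opNorm_mul_le (A B : Matrix (Fin 2) (Fin 2) ℂ) : opNorm (A * B) ≤ opNorm A * opNorm B := by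
  unfold opNorm
  rw [map_mul]
  exact norm_mul_le _ _

lemma norm_toCLM_apply_le (A : Matrix (Fin 2) (Fin 2) ℂ) (x : EuclideanSpace ℂ (Fin 2)) :
    ‖toCLM A x‖ ≤ opNorm A * ‖x‖ :=
  (toCLM A).le_opNorm x

lemma toCLM_apply (A : Matrix (Fin 2) (Fin 2) ℂ) (x : EuclideanSpace ℂ (Fin 2)) (i : Fin 2) :
    toCLM A x i = A i 0 * x 0 + A i 1 * x 1 := by
  simp [Matrix.mulVec, dotProduct, Fin.sum_univ_two]

/-- The vector `(-conj x₁, conj x₀)`, orthogonal to `x` and of the same norm. -/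
noncomputable def perp (x : EuclideanSpace ℂ (Fin 2)) : EuclideanSpace ℂ (Fin 2) :=
  !₂[-star (x 1), star (x 0)]

lemma norm_perp (x : EuclideanSpace ℂ (Fin 2)) : ‖perp x‖ = ‖x‖ := by
  simp [perp, EuclideanSpace.norm_eq, add_comm]

lemma inner_perp (x y : EuclideanSpace ℂ (Fin 2)) : ⟪perp x, y⟫_ℂ = x 0 * y 1 - x 1 * y 0 := by
  simp [perp, PiLp.inner_apply, Fin.sum_univ_two, mul_comm, ← sub_eq_neg_add]

lemma inner_perp_apply_apply (A : Matrix (Fin 2) (Fin 2) ℂ) (x y : EuclideanSpace ℂ (Fin 2)) :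
    ⟪perp (toCLM A x), toCLM A y⟫_ℂ = A.det * ⟪perp x, y⟫_ℂ := by
  simp only [inner_perp, toCLM_apply, Matrix.det_fin_two]
  ring

lemma norm_sq_smul_eq_inner_smul_add (x y : EuclideanSpace ℂ (Fin 2)) :
    (‖x‖ ^ 2 : ℂ) • y = ⟪x, y⟫_ℂ • x + ⟪perp x, y⟫_ℂ • perp x := by
  have hnorm : (‖x‖ ^ 2 : ℂ) = star (x 0) * x 0 + star (x 1) * x 1 := by
    simp [← Complex.ofReal_pow, EuclideanSpace.norm_sq_eq, Fin.sum_univ_two, Complex.conj_mul']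
  have hinner : ⟪x, y⟫_ℂ = star (x 0) * y 0 + star (x 1) * y 1 := by
    simp [PiLp.inner_apply, Fin.sum_univ_two, mul_comm]
  rw [hnorm, hinner, inner_perp]
  ext i
  fin_cases i
  · change _ * y 0 = _ * x 0 + _ * -star (x 1)
    ring
  · change _ * y 1 = _ * x 1 + _ * star (x 0)
    ring

lemma norm_det_le_opNorm_sq (A : Matrix (Fin 2) (Fin 2) ℂ) : ‖A.det‖ ≤ opNorm A ^ 2 := by
  obtain ⟨x, hx⟩ := exists_norm_eq (EuclideanSpace ℂ (Fin 2)) zero_le_one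
  calc ‖A.det‖ = ‖⟪perp (toCLM A x), toCLM A (perp x)⟫_ℂ‖ := by
        simp [inner_perp_apply_apply, inner_self_eq_norm_sq_to_K, norm_perp, hx]
    _ ≤ ‖perp (toCLM A x)‖ * ‖toCLM A (perp x)‖ := norm_inner_le_norm _ _
    _ ≤ (opNorm A * ‖x‖) * (opNorm A * ‖perp x‖) := by
        rw [norm_perp]
        have := opNorm_nonneg A
        gcongr <;> exact norm_toCLM_apply_le A _
    _ = opNorm A ^ 2 := by
        rw [norm_perp, hx]
        ring

lemma one_le_opNorm {A : Matrix (Fin 2) (Fin 2) ℂ} (hA : A.det = 1) : 1 ≤ opNorm A := by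
  have := norm_det_le_opNorm_sq A
  rw [hA, norm_one] at this
  exact (one_le_sq_iff₀ (opNorm_nonneg A)).mp this

/-- The orthogonal decomposition of `B x` along `B y`, carried along by `A`. -/
lemma norm_sq_smul_mul_apply (A B : Matrix (Fin 2) (Fin 2) ℂ) (x y : EuclideanSpace ℂ (Fin 2)) :
    (‖toCLM B y‖ ^ 2 : ℂ) • toCLM (A * B) x = ⟪toCLM B y, toCLM B x⟫_ℂ • toCLM (A * B) y +
      (B.det * ⟪perp y, x⟫_ℂ) • toCLM A (perp (toCLM B y)) := by
  have h := congrArg (toCLM A) (norm_sq_smul_eq_inner_smul_add (toCLM B y) (toCLM B x))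
  simpa only [map_smul, map_add, map_mul, inner_perp_apply_apply, mul_apply_eq_comp] using h

lemma opNorm_mul_norm_apply_le (A B : Matrix (Fin 2) (Fin 2) ℂ) (y : EuclideanSpace ℂ (Fin 2)) :
    opNorm (A * B) * ‖toCLM B y‖ ≤
      opNorm B * ‖toCLM (A * B) y‖ + ‖B.det‖ * opNorm A * ‖y‖ := by
  set v := toCLM B y with hv
  rcases (norm_nonneg v).eq_or_lt with hzero | hpos
  · rw [← hzero, mul_zero]
    unfold opNorm
    positivity
  rw [← le_div_iff₀ hpos]
  refine (toCLM (A * B)).opNorm_le_bound (by unfold opNorm; positivity) fun x => ?_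
  have hcoeff : ‖⟪v, toCLM B x⟫_ℂ‖ ≤ ‖v‖ * (opNorm B * ‖x‖) :=
    (norm_inner_le_norm _ _).trans (by gcongr; exact norm_toCLM_apply_le B x)
  have hcoeff' : ‖⟪perp y, x⟫_ℂ‖ ≤ ‖y‖ * ‖x‖ := by
    simpa only [norm_perp] using norm_inner_le_norm (𝕜 := ℂ) (perp y) x
  have hperp : ‖toCLM A (perp v)‖ ≤ opNorm A * ‖v‖ := by
    simpa only [norm_perp] using norm_toCLM_apply_le A (perp v)
  have hscaled : ‖v‖ ^ 2 * ‖toCLM (A * B) x‖ ≤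
      (‖v‖ * (opNorm B * ‖x‖)) * ‖toCLM (A * B) y‖ +
        (‖B.det‖ * (‖y‖ * ‖x‖)) * (opNorm A * ‖v‖) := by
    calc ‖v‖ ^ 2 * ‖toCLM (A * B) x‖ = ‖(‖v‖ ^ 2 : ℂ) • toCLM (A * B) x‖ := by
          simp [norm_smul]
      _ ≤ ‖⟪v, toCLM B x⟫_ℂ‖ * ‖toCLM (A * B) y‖ +
          (‖B.det‖ * ‖⟪perp y, x⟫_ℂ‖) * ‖toCLM A (perp v)‖ := by
          rw [hv, norm_sq_smul_mul_apply, ← norm_mul, ← norm_smul, ← norm_smul]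
          exact norm_add_le _ _
      _ ≤ _ := by gcongr
  rw [div_mul_eq_mul_div, le_div_iff₀ hpos]
  refine le_of_mul_le_mul_left ?_ hpos
  linarith

/-- As `A * B` is much larger than both factors, `u` is dominated by its images under `A` and `B⁻¹`;
`v` and `y` stand for approximations of these. -/
lemma norm_le_of_four_mul_opNorm_le {A B : Matrix (Fin 2) (Fin 2) ℂ} (hB : B.det = 1)
    (hA_le : 4 * opNorm A ≤ opNorm (A * B)) (hB_le : 4 * opNorm B ≤ opNorm (A * B))
    (y u v : EuclideanSpace ℂ (Fin 2)) :
    ‖u‖ ≤ (‖v‖ + ‖y‖) / 4 + ‖v - toCLM A u‖ / 4 + (1 + opNorm B / 4) * ‖u - toCLM B y‖ := by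
  set e := u - toCLM B y with he
  have hu : ‖u‖ ≤ ‖toCLM B y‖ + ‖e‖ := norm_le_norm_add_norm_sub' u _
  have hABy : ‖toCLM (A * B) y‖ ≤ ‖v‖ + ‖v - toCLM A u‖ + opNorm A * ‖e‖ := by
    have heq : toCLM (A * B) y = v - (v - toCLM A u) - toCLM A e := by
      rw [map_mul, mul_apply_eq_comp, he, map_sub]
      abel
    rw [heq]
    refine (norm_sub_le _ _).trans (add_le_add (norm_sub_le _ _) (norm_toCLM_apply_le A e))
  have hkey := opNorm_mul_norm_apply_le A B y
  rw [hB, norm_one, one_mul] at hkey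
  have hpos : 0 < opNorm (A * B) := by linarith [one_le_opNorm hB]
  have hB_nonneg : 0 ≤ opNorm B := opNorm_nonneg B
  refine le_of_mul_le_mul_left ?_ hpos
  calc opNorm (A * B) * ‖u‖ ≤ opNorm (A * B) * ‖toCLM B y‖ + opNorm (A * B) * ‖e‖ := by
        rw [← mul_add]
        gcongr
    _ ≤ opNorm B * (‖v‖ + ‖v - toCLM A u‖) + opNorm A * ‖y‖ +
          opNorm B * ‖e‖ * opNorm A + opNorm (A * B) * ‖e‖ := by
        linarith [mul_le_mul_of_nonneg_left hABy hB_nonneg]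
    _ ≤ opNorm (A * B) / 4 * (‖v‖ + ‖v - toCLM A u‖) + opNorm (A * B) / 4 * ‖y‖ +
          opNorm B * ‖e‖ * (opNorm (A * B) / 4) + opNorm (A * B) * ‖e‖ := by
        gcongr <;> linarith
    _ = _ := by ring

/-! ### Transfer matrices -/

lemma det_transferT (lam : ℝ) (E : ℂ) (a : ℝ) : (transferT lam E a).det = 1 := by
  simp [transferT, Matrix.det_fin_two]

lemma det_transferM (lam : ℝ) (E : ℂ) (w : List ℝ) : (transferM lam E w).det = 1 := by
  induction w with
  | nil => simp [transferM]
  | cons a w ih => rw [transferM, Matrix.det_mul, ih, det_transferT, mul_one]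

lemma one_le_opNorm_transferM (lam : ℝ) (E : ℂ) (w : List ℝ) : 1 ≤ opNorm (transferM lam E w) :=
  one_le_opNorm (det_transferM lam E w)

lemma opNorm_transferM_pos (lam : ℝ) (E : ℂ) (w : List ℝ) : 0 < opNorm (transferM lam E w) :=
  one_pos.trans_le (one_le_opNorm_transferM lam E w)

lemma transferM_append (lam : ℝ) (E : ℂ) (w w' : List ℝ) :
    transferM lam E (w ++ w') = transferM lam E w' * transferM lam E w := by
  induction w with
  | nil => simp [transferM]
  | cons a w ih => rw [List.cons_append, transferM, transferM, ih, mul_assoc]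

lemma transferM_subword_add (lam : ℝ) (E : ℂ) (v : ℤ → ℝ) (k : ℤ) (m n : ℕ) :
    transferM lam E (subword v k (m + n)) =
      transferM lam E (subword v (k + m) n) * transferM lam E (subword v k m) := by
  rw [subword_add, transferM_append]

lemma opNorm_transferM_le {lam : ℝ} {E : ℂ} {w : List ℝ} {t : ℝ}
    (h : ∀ a ∈ w, opNorm (transferT lam E a) ≤ t) : opNorm (transferM lam E w) ≤ t ^ w.length := by
  induction w with
  | nil => simp [transferM, opNorm]
  | cons a w ih =>
    rw [List.forall_mem_cons] at h
    rw [transferM, List.length_cons, pow_succ]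
    refine (opNorm_mul_le _ _).trans (mul_le_mul (ih h.2) h.1 (opNorm_nonneg _) (pow_nonneg ?_ _))
    exact (opNorm_nonneg _).trans h.1

lemma opNorm_transferM_subword_le {lam : ℝ} {E : ℂ} {v : ℤ → ℝ} {t : ℝ}
    (ht : ∀ n, opNorm (transferT lam E (v n)) ≤ t) (k : ℤ) (n : ℕ) :
    opNorm (transferM lam E (subword v k n)) ≤ t ^ n := by
  have hlen : (subword v k n).length = n := by simp [subword]
  nth_rw 2 [← hlen]
  refine opNorm_transferM_le fun a ha => ?_
  obtain ⟨i, -, rfl⟩ := List.mem_map.mp ha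
  exact ht _

lemma exists_opNorm_transferT_sturmian_le (lam : ℝ) (E : ℂ) (α : ℝ) :
    ∃ t ≥ 1, ∀ x n, opNorm (transferT lam E (sturmian α x n)) ≤ t := by
  refine ⟨max (opNorm (transferT lam E 1)) (opNorm (transferT lam E 0)),
    le_max_of_le_left (one_le_opNorm (det_transferT lam E 1)), fun x n => ?_⟩
  unfold sturmian
  split_ifs
  exacts [le_max_left _ _, le_max_right _ _]

lemma isSubadditiveCocycle_log_opNorm_transferM (lam : ℝ) (E : ℂ) (α : ℝ) :
    IsSubadditiveCocycle (fun x => x + α)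
      fun x n => Real.log (opNorm (transferM lam E (sturmianWord α x n))) where
  nonneg x n := Real.log_nonneg (one_le_opNorm_transferM lam E _)
  bddAbove n := by
    obtain ⟨t, -, ht⟩ := exists_opNorm_transferT_sturmian_le lam E α
    refine ⟨Real.log (t ^ n), forall_mem_range.mpr fun x => ?_⟩
    rw [sturmianWord_eq_subword]
    exact Real.log_le_log (opNorm_transferM_pos lam E _) (opNorm_transferM_subword_le (ht x) 0 n)
  add_le x m n := by
    have hword : sturmianWord α x (m + n) =
        sturmianWord α x m ++ sturmianWord α ((fun x => x + α)^[m] x) n := by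
      have hshift : (fun x => x + α)^[m] x = x + (m : ℤ) * α := by simp
      rw [hshift, sturmianWord_add_mul, sturmianWord_eq_subword, sturmianWord_eq_subword,
        subword_add, zero_add]
    rw [← Real.log_mul (opNorm_transferM_pos lam E _).ne' (opNorm_transferM_pos lam E _).ne',
      mul_comm, hword]
    refine Real.log_le_log (opNorm_transferM_pos lam E _) ?_
    rw [transferM_append]
    exact opNorm_mul_le _ _

/-! ### Operators on `ℓ²(ℤ)` -/

section BoundedBelow

variable {𝕜 F : Type*} [RCLike 𝕜] [NormedAddCommGroup F] [InnerProductSpace 𝕜 F] [CompleteSpace F]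

lemma isUnit_of_isStarNormal_of_norm_le {T : F →L[𝕜] F} (hT : IsStarNormal T) {C : ℝ}
    (hC : ∀ u, ‖u‖ ≤ C * ‖T u‖) : IsUnit T := by
  have hanti : AntilipschitzWith C.toNNReal T := T.antilipschitz_of_bound fun u =>
    (hC u).trans (by gcongr; exact Real.le_coe_toNNReal C)
  rw [ContinuousLinearMap.isUnit_iff_bijective,
    ContinuousLinearMap.bijective_iff_dense_range_and_antilipschitz]
  refine ⟨?_, _, hanti⟩
  rw [Submodule.topologicalClosure_eq_top_iff,
    ContinuousLinearMap.IsStarNormal.orthogonal_range hT, LinearMap.ker_eq_bot]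
  exact hanti.injective

lemma notMem_spectrum_of_isStarNormal_of_norm_le {T : F →L[𝕜] F} (hT : IsStarNormal T) {z : 𝕜}
    {C : ℝ} (hC : ∀ u, ‖u‖ ≤ C * ‖(T - z • 1) u‖) : z ∉ spectrum 𝕜 T := by
  have hnormal : IsStarNormal (T - z • 1) := by
    refine Commute.isStarNormal_sub ?_
    rw [star_smul, star_one]
    exact (Commute.one_right T).smul_right _
  rw [spectrum.notMem_iff, Algebra.algebraMap_eq_smul_one, IsUnit.sub_iff]
  exact isUnit_of_isStarNormal_of_norm_le hnormal hC

end BoundedBelow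

local notation "ℓ²ℤ" => lp (fun _ : ℤ => ℂ) 2

lemma hasSum_norm_sq (u : ℓ²ℤ) : HasSum (fun n => ‖u n‖ ^ 2) (‖u‖ ^ 2) := by
  simpa using lp.hasSum_norm (p := 2) (by norm_num) u

/-- `H` is the discrete Schrödinger operator with potential `v`. -/
def IsSchrodinger (v : ℤ → ℝ) (H : ℓ²ℤ →L[ℂ] ℓ²ℤ) : Prop :=
  ∀ (u : ℓ²ℤ) (n : ℤ), H u n = u (n + 1) + u (n - 1) + v n * u n

lemma IsSchrodinger.apply_single {v : ℤ → ℝ} {H : ℓ²ℤ →L[ℂ] ℓ²ℤ} (hH : IsSchrodinger v H) (n : ℤ) :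
    H (lp.single 2 n 1) =
      lp.single 2 (n + 1) 1 + lp.single 2 (n - 1) 1 + lp.single 2 n (v n : ℂ) := by
  ext m
  rw [hH, lp.coeFn_add, lp.coeFn_add, Pi.add_apply, Pi.add_apply]
  simp only [lp.single_apply, Pi.single_apply, eq_sub_iff_add_eq, sub_eq_iff_eq_add]
  rcases eq_or_ne m n with rfl | hmn
  · simp
  · simp [hmn, add_comm]

lemma IsSchrodinger.isSelfAdjoint {v : ℤ → ℝ} {H : ℓ²ℤ →L[ℂ] ℓ²ℤ} (hH : IsSchrodinger v H) :
    IsSelfAdjoint H := by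
  rw [ContinuousLinearMap.isSelfAdjoint_iff']
  ext u n
  have hcoord (w : ℓ²ℤ) : w n = ⟪lp.single 2 n (1 : ℂ), w⟫_ℂ := by simp [lp.inner_single_left]
  rw [hcoord (H.adjoint u), ContinuousLinearMap.adjoint_inner_right, hH.apply_single, hH]
  simp [inner_add_left, lp.inner_single_left, mul_comm]

lemma hasSum_sum_Ioc {M : Type*} [AddCommMonoid M] [TopologicalSpace M] [ContinuousAdd M]
    {φ : ℤ → M} {s : M} (hφ : HasSum φ s) (a b : ℤ) :
    HasSum (fun k => ∑ i ∈ Finset.Ioc (k + a) (k + b), φ i) ((b - a).toNat • s) := by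
  have hshift (k : ℤ) :
      ∑ i ∈ Finset.Ioc (k + a) (k + b), φ i = ∑ i ∈ Finset.Ioc a b, φ (k + i) := by
    rw [← Finset.map_add_left_Ioc, Finset.sum_map]
    rfl
  simp only [hshift]
  have := hasSum_sum fun i (_ : i ∈ Finset.Ioc a b) => (Equiv.addRight i).hasSum_iff.mpr hφ
  simpa using this

/-- Since `3 * (1 / 16 + 1 / 16) < 1`, the square sum of the shifts of `g` is absorbed by that of
`g`. -/
lemma le_of_le_shift_add_sum_Ioc {g f : ℤ → ℝ} {G F C : ℝ} {a b : ℤ} (hg_nonneg : ∀ k, 0 ≤ g k)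
    (hg : HasSum (fun k => g k ^ 2) G) (hf : HasSum (fun k => f k ^ 2) F)
    (h : ∀ k, g k ≤ (g (k + b) + g (k + a)) / 4 + C * ∑ i ∈ Finset.Ioc (k + a) (k + b), f i) :
    G ≤ 5 * (C * (b - a).toNat) ^ 2 * F := by
  set L := (b - a).toNat
  have hsq (k : ℤ) : g k ^ 2 ≤ 3 / 16 * g (k + b) ^ 2 + 3 / 16 * g (k + a) ^ 2 +
      3 * C ^ 2 * L * ∑ i ∈ Finset.Ioc (k + a) (k + b), f i ^ 2 := by
    set S := ∑ i ∈ Finset.Ioc (k + a) (k + b), f i with hS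
    have hcauchy : S ^ 2 ≤ L * ∑ i ∈ Finset.Ioc (k + a) (k + b), f i ^ 2 := by
      simpa [hS, L] using sq_sum_le_card_mul_sum_sq (s := Finset.Ioc (k + a) (k + b)) (f := f)
    calc g k ^ 2 ≤ ((g (k + b) + g (k + a)) / 4 + C * S) ^ 2 :=
          pow_le_pow_left₀ (hg_nonneg k) (h k) 2
      _ ≤ 3 / 16 * g (k + b) ^ 2 + 3 / 16 * g (k + a) ^ 2 + 3 * C ^ 2 * S ^ 2 := by
          linarith [sq_nonneg (g (k + b) - g (k + a)), sq_nonneg (g (k + b) / 4 - C * S),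
            sq_nonneg (g (k + a) / 4 - C * S)]
      _ ≤ 3 / 16 * g (k + b) ^ 2 + 3 / 16 * g (k + a) ^ 2 + 3 * C ^ 2 *
            (L * ∑ i ∈ Finset.Ioc (k + a) (k + b), f i ^ 2) := by gcongr
      _ = _ := by ring
  have hsum := hasSum_le hsq hg
    ((((Equiv.addRight b).hasSum_iff.mpr hg).mul_left (3 / 16)).add
      (((Equiv.addRight a).hasSum_iff.mpr hg).mul_left (3 / 16)) |>.add
      ((hasSum_sum_Ioc hf a b).mul_left (3 * C ^ 2 * L)))
  rw [nsmul_eq_mul] at hsum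
  have hF : 0 ≤ F := hf.nonneg fun k => sq_nonneg (f k)
  have : 0 ≤ (C * L) ^ 2 * F := by positivity
  linarith

/-! ### A priori estimate -/

/-- The vector `(u (n + 1), u n)`, on which the transfer matrices act. -/
noncomputable def phaseVector (u : ℤ → ℂ) (n : ℤ) : EuclideanSpace ℂ (Fin 2) :=
  !₂[u (n + 1), u n]

lemma norm_phaseVector_sq (u : ℤ → ℂ) (n : ℤ) :
    ‖phaseVector u n‖ ^ 2 = ‖u (n + 1)‖ ^ 2 + ‖u n‖ ^ 2 := by
  simp [phaseVector, EuclideanSpace.norm_sq_eq, Fin.sum_univ_two]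

lemma hasSum_norm_phaseVector_sq (u : ℓ²ℤ) :
    HasSum (fun n => ‖phaseVector u n‖ ^ 2) (2 * ‖u‖ ^ 2) := by
  simp only [norm_phaseVector_sq, two_mul]
  exact ((Equiv.addRight 1).hasSum_iff.mpr (hasSum_norm_sq u)).add (hasSum_norm_sq u)

lemma IsSchrodinger.sub_smul_one_apply {v : ℤ → ℝ} {H : ℓ²ℤ →L[ℂ] ℓ²ℤ} (hH : IsSchrodinger v H)
    (E : ℂ) (u : ℓ²ℤ) (n : ℤ) :
    (H - E • 1) u n = u (n + 1) + u (n - 1) + v n * u n - E * u n := by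
  change H u n - E * u n = _
  rw [hH]

lemma IsSchrodinger.norm_phaseVector_sub {lam : ℝ} {v : ℤ → ℝ} {H : ℓ²ℤ →L[ℂ] ℓ²ℤ}
    (hH : IsSchrodinger (fun n => lam * v n) H) (E : ℂ) (u : ℓ²ℤ) (k : ℤ) :
    ‖phaseVector u (k + 1) - toCLM (transferT lam E (v (k + 1))) (phaseVector u k)‖ =
      ‖(H - E • 1) u (k + 1)‖ := by
  have hstep : phaseVector u (k + 1) - toCLM (transferT lam E (v (k + 1))) (phaseVector u k) =
      !₂[(H - E • 1) u (k + 1), 0] := by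
    rw [hH.sub_smul_one_apply]
    ext i
    rw [PiLp.sub_apply, toCLM_apply]
    fin_cases i
    · change u (k + 1 + 1) - ((E - lam * v (k + 1)) * u (k + 1) + -1 * u k) =
        u (k + 1 + 1) + u (k + 1 - 1) + (lam * v (k + 1) : ℝ) * u (k + 1) - E * u (k + 1)
      rw [add_sub_cancel_right]
      push_cast
      ring
    · simp [phaseVector, transferT]
  rw [hstep]
  simp [EuclideanSpace.norm_eq]

lemma norm_sub_transferM_apply_le {lam : ℝ} {E : ℂ} {v : ℤ → ℝ} {t : ℝ} (ht_one : 1 ≤ t)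
    (ht : ∀ n, opNorm (transferT lam E (v n)) ≤ t) {U : ℤ → EuclideanSpace ℂ (Fin 2)} {δ : ℤ → ℝ}
    (hU : ∀ k, ‖U (k + 1) - toCLM (transferT lam E (v (k + 1))) (U k)‖ ≤ δ (k + 1))
    (k : ℤ) (n : ℕ) :
    ‖U (k + n) - toCLM (transferM lam E (subword v k n)) (U k)‖ ≤
      t ^ n * ∑ i ∈ Finset.Ioc k (k + n), δ i := by
  induction n with
  | zero => simp [subword, transferM]
  | succ n ih =>
    set r := U (k + n) - toCLM (transferM lam E (subword v k n)) (U k)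
    set T := transferT lam E (v (k + n + 1))
    have hδ : 0 ≤ δ (k + n + 1) := (norm_nonneg _).trans (hU (k + n))
    have hT : ‖toCLM T r‖ ≤ t * (t ^ n * ∑ i ∈ Finset.Ioc k (k + n), δ i) :=
      (norm_toCLM_apply_le T r).trans
        (mul_le_mul (ht _) ih (norm_nonneg _) (zero_le_one.trans ht_one))
    have hsplit : U (k + (n + 1 : ℕ)) - toCLM (transferM lam E (subword v k (n + 1))) (U k) =
        (U (k + n + 1) - toCLM T (U (k + n))) + toCLM T r := by
      rw [transferM_subword_add, subword_one, transferM, transferM, one_mul, map_mul,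
        mul_apply_eq_comp, map_sub, Nat.cast_succ, ← add_assoc, sub_add_sub_cancel]
    have hsum : ∑ i ∈ Finset.Ioc k (k + (n + 1 : ℕ)), δ i =
        ∑ i ∈ Finset.Ioc k (k + n), δ i + δ (k + n + 1) := by
      rw [Nat.cast_succ, ← add_assoc, ← Finset.insert_Ioc_right_eq_Ioc_add_one (by lia),
        Finset.sum_insert (by simp), add_comm]
    calc _ ≤ δ (k + n + 1) + t * (t ^ n * ∑ i ∈ Finset.Ioc k (k + n), δ i) := by
          rw [hsplit]
          exact (norm_add_le _ _).trans (add_le_add (hU _) hT)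
      _ ≤ t ^ (n + 1) * δ (k + n + 1) + t * (t ^ n * ∑ i ∈ Finset.Ioc k (k + n), δ i) := by
          gcongr
          exact le_mul_of_one_le_left hδ (one_le_pow₀ ht_one)
      _ = _ := by
          rw [hsum]
          ring

lemma norm_le_add_sum_Ioc_of_gap {lam : ℝ} {E : ℂ} {v : ℤ → ℝ} {t : ℝ} (ht_one : 1 ≤ t)
    (ht : ∀ n, opNorm (transferT lam E (v n)) ≤ t) {U : ℤ → EuclideanSpace ℂ (Fin 2)} {δ : ℤ → ℝ}
    (hU : ∀ k, ‖U (k + 1) - toCLM (transferT lam E (v (k + 1))) (U k)‖ ≤ δ (k + 1)) {k : ℤ}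
    {m n : ℕ}
    (hm : 4 * opNorm (transferM lam E (subword v k m)) ≤
      opNorm (transferM lam E (subword v k (m + n))))
    (hn : 4 * opNorm (transferM lam E (subword v (k + m) n)) ≤
      opNorm (transferM lam E (subword v k (m + n)))) :
    ‖U (k + m)‖ ≤ (‖U (k + m + n)‖ + ‖U k‖) / 4 +
      (t ^ n / 4 + (1 + t ^ m / 4) * t ^ m) * ∑ i ∈ Finset.Ioc k (k + m + n), δ i := by
  set S := ∑ i ∈ Finset.Ioc k (k + m + n), δ i
  have hδ (i : ℤ) : 0 ≤ δ i := by
    simpa using (norm_nonneg _).trans (hU (i - 1))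
  have hfst : ∑ i ∈ Finset.Ioc k (k + m), δ i ≤ S :=
    Finset.sum_le_sum_of_subset_of_nonneg (Finset.Ioc_subset_Ioc le_rfl (by lia))
      fun i _ _ => hδ i
  have hsnd : ∑ i ∈ Finset.Ioc (k + m) (k + m + n), δ i ≤ S :=
    Finset.sum_le_sum_of_subset_of_nonneg (Finset.Ioc_subset_Ioc (by lia) le_rfl)
      fun i _ _ => hδ i
  have ht_nonneg : 0 ≤ t := zero_le_one.trans ht_one
  rw [transferM_subword_add] at hm hn
  calc ‖U (k + m)‖ ≤ (‖U (k + m + n)‖ + ‖U k‖) / 4 +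
        ‖U (k + m + n) - toCLM (transferM lam E (subword v (k + m) n)) (U (k + m))‖ / 4 +
        (1 + opNorm (transferM lam E (subword v k m)) / 4) *
          ‖U (k + m) - toCLM (transferM lam E (subword v k m)) (U k)‖ :=
        norm_le_of_four_mul_opNorm_le (det_transferM lam E _) hn hm _ _ _
    _ ≤ (‖U (k + m + n)‖ + ‖U k‖) / 4 + t ^ n * S / 4 + (1 + t ^ m / 4) * (t ^ m * S) := by
        gcongr
        · exact (norm_sub_transferM_apply_le ht_one ht hU _ n).trans (by gcongr)
        · exact opNorm_transferM_subword_le ht k m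
        · exact (norm_sub_transferM_apply_le ht_one ht hU k m).trans (by gcongr)
    _ = _ := by ring

theorem IsSchrodinger.exists_norm_le_of_gap {lam : ℝ} {E : ℂ} {v : ℤ → ℝ} {H : ℓ²ℤ →L[ℂ] ℓ²ℤ}
    (hH : IsSchrodinger (fun n => lam * v n) H) {t : ℝ} (ht_one : 1 ≤ t)
    (ht : ∀ n, opNorm (transferT lam E (v n)) ≤ t) {m n : ℕ}
    (hm : ∀ k, 4 * opNorm (transferM lam E (subword v k m)) ≤
      opNorm (transferM lam E (subword v k (m + n))))
    (hn : ∀ k : ℤ, 4 * opNorm (transferM lam E (subword v (k + m) n)) ≤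
      opNorm (transferM lam E (subword v k (m + n)))) :
    ∃ C, ∀ u, ‖u‖ ≤ C * ‖(H - E • 1) u‖ := by
  set K := t ^ n / 4 + (1 + t ^ m / 4) * t ^ m
  refine ⟨√5 * (K * (m + n)), fun u => ?_⟩
  have hpoint (k : ℤ) : ‖phaseVector u k‖ ≤
      (‖phaseVector u (k + n)‖ + ‖phaseVector u (k + -m)‖) / 4 +
        K * ∑ i ∈ Finset.Ioc (k + -m) (k + n), ‖(H - E • 1) u i‖ := by
    simpa using norm_le_add_sum_Ioc_of_gap ht_one ht
      (fun j => (hH.norm_phaseVector_sub E u j).le) (hm (k + -m)) (hn (k + -m))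
  have hsum := le_of_le_shift_add_sum_Ioc (fun k => norm_nonneg (phaseVector u k))
    (hasSum_norm_phaseVector_sq u) (hasSum_norm_sq _) hpoint
  have hlen : ((n - -m : ℤ).toNat : ℝ) = m + n := by
    have : (n - -m : ℤ).toNat = m + n := by lia
    rw [this, Nat.cast_add]
  rw [hlen] at hsum
  refine le_of_sq_le_sq ?_ (by positivity)
  rw [mul_pow, mul_pow, Real.sq_sqrt (by norm_num)]
  linarith [sq_nonneg ‖u‖]

/-! ### Vanishing of the Lyapunov exponent -/

lemma IsSchrodinger.notMem_spectrum_of_gap {lam α x : ℝ} {E : ℂ} {H : ℓ²ℤ →L[ℂ] ℓ²ℤ}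
    (hH : IsSchrodinger (fun n => lam * sturmian α x n) H) {m n : ℕ}
    (hgap : ∀ y,
      4 * opNorm (transferM lam E (sturmianWord α y m)) ≤
        opNorm (transferM lam E (sturmianWord α y (m + n))) ∧
      4 * opNorm (transferM lam E (sturmianWord α (y + m * α) n)) ≤
        opNorm (transferM lam E (sturmianWord α y (m + n)))) :
    E ∉ spectrum ℂ H := by
  obtain ⟨t, ht_one, ht⟩ := exists_opNorm_transferT_sturmian_le lam E α
  obtain ⟨C, hC⟩ := hH.exists_norm_le_of_gap ht_one (ht x) (m := m) (n := n)
    (fun k => by simpa only [sturmianWord_add_mul] using (hgap (x + k * α)).1)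
    (fun k => by
      have h := (hgap (x + k * α)).2
      have hshift : x + k * α + m * α = x + (k + m : ℤ) * α := by
        push_cast
        ring
      rwa [hshift, sturmianWord_add_mul, sturmianWord_add_mul] at h)
  exact notMem_spectrum_of_isStarNormal_of_norm_le hH.isSelfAdjoint.isStarNormal hC

theorem tendsto_iSup_log_opNorm_transferM_div {lam α x : ℝ} {E : ℂ} {H : ℓ²ℤ →L[ℂ] ℓ²ℤ}
    (hirr : Irrational α) (hα : α ∈ Ioo (0 : ℝ) 1)
    (hH : IsSchrodinger (fun n => lam * sturmian α x n) H) (hE : E ∈ spectrum ℂ H) :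
    Tendsto (fun n : ℕ => (⨆ y, Real.log (opNorm (transferM lam E (sturmianWord α y n)))) / n)
      atTop (𝓝 0) := by
  have hlog {w w' : List ℝ} (h : Real.log (opNorm (transferM lam E w)) + Real.log 4 ≤
      Real.log (opNorm (transferM lam E w'))) :
      4 * opNorm (transferM lam E w) ≤ opNorm (transferM lam E w') := by
    have hw := opNorm_transferM_pos lam E w
    rwa [← Real.log_mul hw.ne' (by norm_num), Real.log_le_log_iff (by positivity)
      (opNorm_transferM_pos lam E w'), mul_comm] at h
  have hiterate (n : ℕ) (y : ℝ) : (fun y => y + α)^[n] y = y + n * α := by simp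
  have hrec := frequently_sturmianWord_recurrent hirr hα
  refine ((isSubadditiveCocycle_log_opNorm_transferM lam E α).tendsto_zero_or_exists_gap (R := 3)
    (hrec.mono fun n hn y z => ?_) (Real.log 4)).resolve_right ?_
  · obtain ⟨j, hj, hword⟩ := hn y z
    exact ⟨j, hj, by rw [hiterate, hword]⟩
  · rintro ⟨m, n, hgap⟩
    refine hH.notMem_spectrum_of_gap (fun y => ⟨hlog (hgap y).1, hlog ?_⟩) hE
    rw [← hiterate]
    exact (hgap y).2

theorem lyapunov_exponent_zero_on_spectrum
    (lam : ℝ) (hlam : lam ≠ 0) (α : ℝ) (hirr : Irrational α) (hα : α ∈ Set.Ioo (0 : ℝ) 1)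
    (θ θ' : ℝ) (hθ : θ ∈ Set.Ico (0 : ℝ) 1) (hθ' : θ' ∈ Set.Ico (0 : ℝ) 1)
    (H : lp (fun _ : ℤ => ℂ) 2 →L[ℂ] lp (fun _ : ℤ => ℂ) 2)
    (hH : (∀ u : lp (fun _ : ℤ => ℂ) 2, ∀ n : ℤ,
      H u n = u (n + 1) + u (n - 1) + (lam * sturmian α θ' n : ℝ) * u n))
    (E : ℂ) (hE : E ∈ spectrum ℂ H) :
    Filter.Tendsto
      (fun n : ℕ => (1 / n : ℝ) * Real.log (opNorm (transferM lam E (sturmianWord α θ n))))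
      Filter.atTop (nhds 0) := by
  have hcocycle := isSubadditiveCocycle_log_opNorm_transferM lam E α
  refine squeeze_zero (fun n => ?_) (fun n => ?_)
    (tendsto_iSup_log_opNorm_transferM_div hirr hα hH hE)
  · exact mul_nonneg (by positivity) (hcocycle.nonneg θ n)
  · rw [one_div_mul_eq_div]
    gcongr
    exact hcocycle.le_iSup θ n
end

section
/- Let α ∈ (0,1) be an irrational bounded density number and let λ ∈ ℝ \ {0}. Then there exist constants C > 0 and μ > 0 such that for all θ, θ' ∈ [0,1), every E in the spectrum of H_{λ,α,θ'}, and every n ∈ ℕ, one has ‖M(λ,E,v_{α,θ}^n)‖ ≤ C·n^μ. -/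
open scoped Classical

/-!
Reading the rotation by `α` at its returns to a shrinking arc around `0` cuts every Sturmian
sequence into two words `A` and `B`, and the additive Euclidean algorithm turns one such pair into
the next, of the form `(A, BA)`.  The Fricke-Vogt invariant
`tr(A)² + tr(B)² + tr(AB)² - tr(A) tr(B) tr(AB)` of the transfer matrices is `4 + λ²` along this
sequence of pairs.

At every site one of the two words is repeated, and the Cayley-Hamilton theorem turns the repetition
into a relation `tr · u(p) = u(p + q) + u(p - q)` for solutions `u` of `Hu = Eu`.  If both traces
exceeded `2` in modulus, a maximum principle would bound `H - E` from below and `E` would lie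
outside the spectrum.  On the spectrum one of the two traces is therefore at most `2`, and the
invariant bounds the trace of the more frequent word at all times.  By the Cayley-Hamilton theorem
one step of the algorithm then multiplies the norms of the transfer matrices by at most a
constant, and reaching words of length `N` takes at most a multiple of `log N` steps because `α`
has bounded density.
-/

namespace SturmianTransfer

noncomputable section

open scoped Matrix.Norms.L2Operator NNReal ENNReal Topology

/-! ### Bounded alternating products -/

section AlternatingProducts

variable {R : Type*} [NormedRing R]

/-- All alternating products of `A` and `B`, of length at most two or equal to `ABA`, have norm at
most `b` when applied to `X`.  This is the quantity propagated from one level of the block hierarchy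
to the next; no power of `A` occurs, so it can be kept under control by the trace of `A` alone. -/
structure AltBound (A B X : R) (b : ℝ) : Prop where
  one : ‖X‖ ≤ b
  left : ‖A * X‖ ≤ b
  right : ‖B * X‖ ≤ b
  left_right : ‖A * (B * X)‖ ≤ b
  right_left : ‖B * (A * X)‖ ≤ b
  left_right_left : ‖A * (B * (A * X))‖ ≤ b

theorem AltBound.nonneg {A B X : R} {b : ℝ} (h : AltBound A B X b) : 0 ≤ b :=
  (norm_nonneg _).trans h.one

theorem AltBound.mono {A B X : R} {b c : ℝ} (h : AltBound A B X b) (hbc : b ≤ c) :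
    AltBound A B X c where
  one := h.one.trans hbc
  left := h.left.trans hbc
  right := h.right.trans hbc
  left_right := h.left_right.trans hbc
  right_left := h.right_left.trans hbc
  left_right_left := h.left_right_left.trans hbc

variable [NormedAlgebra ℂ R] {A B : R} {t z : ℂ} {K b : ℝ}

theorem norm_mul_mul_self_mul_le (hA : A * A = t • A - 1) (ht : ‖t‖ ≤ K) {Y Z : R}
    (hZAY : ‖Z * (A * Y)‖ ≤ b) (hZY : ‖Z * Y‖ ≤ b) : ‖Z * (A * (A * Y))‖ ≤ (K + 1) * b := by
  have hexpand : Z * (A * (A * Y)) = t • (Z * (A * Y)) - Z * Y := by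
    rw [← mul_assoc A, hA, sub_mul, smul_mul_assoc, one_mul, mul_sub, mul_smul_comm]
  calc ‖Z * (A * (A * Y))‖ ≤ ‖t‖ * ‖Z * (A * Y)‖ + ‖Z * Y‖ := by
        rw [hexpand, ← norm_smul]; exact norm_sub_le _ _
    _ ≤ K * b + b := by gcongr; exact (norm_nonneg _).trans ht
    _ = (K + 1) * b := by ring

theorem norm_mul_self_mul_le (hA : A * A = t • A - 1) (ht : ‖t‖ ≤ K) {Y : R}
    (hAY : ‖A * Y‖ ≤ b) (hY : ‖Y‖ ≤ b) : ‖A * (A * Y)‖ ≤ (K + 1) * b := by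
  simpa only [one_mul] using
    norm_mul_mul_self_mul_le (Z := 1) hA ht (by rwa [one_mul]) (by rwa [one_mul])

theorem AltBound.attach (hA : A * A = t • A - 1) (ht : ‖t‖ ≤ K) {X : R}
    (h : AltBound A B X b) : AltBound A (A * B) X ((K + 1) * b) := by
  have hb : b ≤ (K + 1) * b := by nlinarith [h.nonneg, (norm_nonneg t).trans ht]
  refine ⟨h.one.trans hb, h.left.trans hb, ?_, ?_, ?_, ?_⟩ <;> rw [mul_assoc]
  · exact h.left_right.trans hb
  · exact norm_mul_self_mul_le hA ht h.left_right h.right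
  · exact h.left_right_left.trans hb
  · exact norm_mul_self_mul_le hA ht h.left_right_left h.right_left

theorem AltBound.mul_left (hA : A * A = t • A - 1) (ht : ‖t‖ ≤ K) {X : R}
    (h : AltBound A B X b) : AltBound A B (A * X) ((K + 1) * b) := by
  have hb : b ≤ (K + 1) * b := by nlinarith [h.nonneg, (norm_nonneg t).trans ht]
  refine ⟨h.left.trans hb, norm_mul_self_mul_le hA ht h.left h.one, h.right_left.trans hb,
    h.left_right_left.trans hb, norm_mul_mul_self_mul_le hA ht h.right_left h.right, ?_⟩
  rw [← mul_assoc]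
  refine norm_mul_mul_self_mul_le hA ht ?_ ?_ <;> rw [mul_assoc]
  · exact h.left_right_left
  · exact h.left_right

theorem AltBound.swap (hBAB : B * (A * B) = z • B - t • 1 + A) (ht : ‖t‖ ≤ K) (hz : ‖z‖ ≤ K)
    {X : R} (h : AltBound A B X b) : AltBound B A X ((2 * K + 1) * b) := by
  have hb0 := h.nonneg
  have hK0 : 0 ≤ K := (norm_nonneg t).trans ht
  have hb : b ≤ (2 * K + 1) * b := by nlinarith [mul_nonneg hK0 hb0]
  refine ⟨h.one.trans hb, h.right.trans hb, h.left.trans hb, h.right_left.trans hb,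
    h.left_right.trans hb, ?_⟩
  have hexpand : B * (A * (B * X)) = z • (B * X) - t • X + A * X := by
    rw [← mul_assoc A, ← mul_assoc B, hBAB, add_mul, sub_mul, smul_mul_assoc, smul_mul_assoc,
      one_mul]
  calc ‖B * (A * (B * X))‖ ≤ ‖z‖ * ‖B * X‖ + ‖t‖ * ‖X‖ + ‖A * X‖ := by
        rw [hexpand, ← norm_smul, ← norm_smul]
        exact (norm_add_le _ _).trans (add_le_add_left (norm_sub_le _ _) _)
    _ ≤ K * b + K * b + b := by
        gcongr
        exacts [h.right, h.one, h.left]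
    _ = (2 * K + 1) * b := by ring

end AlternatingProducts

/-! ### Two by two matrices of determinant one -/

section TwoByTwo

variable {R : Type*} [CommRing R] {A B : Matrix (Fin 2) (Fin 2) R}

theorem mul_self_eq_trace_smul_sub_one (hA : A.det = 1) : A * A = A.trace • A - 1 := by
  rw [Matrix.det_fin_two] at hA
  ext i j
  fin_cases i <;> fin_cases j <;>
    simp [Matrix.mul_apply, Fin.sum_univ_two, Matrix.trace_fin_two] <;> grind

theorem mul_mul_eq_trace_smul (hA : A.det = 1) (hB : B.det = 1) :
    B * (A * B) = (A * B).trace • B - A.trace • 1 + A := by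
  rw [Matrix.det_fin_two] at hA hB
  ext i j
  fin_cases i <;> fin_cases j <;>
    simp [Matrix.mul_apply, Fin.sum_univ_two, Matrix.trace_fin_two] <;> grind

theorem trace_mul_mul_self (hA : A.det = 1) :
    (A * (A * B)).trace = A.trace * (A * B).trace - B.trace := by
  rw [← mul_assoc, mul_self_eq_trace_smul_sub_one hA, sub_mul, smul_mul_assoc, one_mul,
    Matrix.trace_sub, Matrix.trace_smul, smul_eq_mul]

/-- The Fricke–Vogt polynomial of the three traces of `A`, `B` and `AB`, which is invariant under
`(A, B) ↦ (A, AB)` for matrices of determinant one. -/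
def frickeVogt (A B : Matrix (Fin 2) (Fin 2) R) : R :=
  A.trace ^ 2 + B.trace ^ 2 + (A * B).trace ^ 2 - A.trace * B.trace * (A * B).trace

theorem frickeVogt_mul_right (hA : A.det = 1) : frickeVogt A (A * B) = frickeVogt A B := by
  unfold frickeVogt
  rw [trace_mul_mul_self hA]
  ring

theorem frickeVogt_comm (A B : Matrix (Fin 2) (Fin 2) R) : frickeVogt B A = frickeVogt A B := by
  unfold frickeVogt
  rw [Matrix.trace_mul_comm B A]
  ring

end TwoByTwo

section FrickeVogtBounds

variable {A B : Matrix (Fin 2) (Fin 2) ℂ} {lam c : ℝ}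

theorem norm_four_add_sq_le (lam : ℝ) : ‖(4 : ℂ) + (lam : ℂ) ^ 2‖ ≤ 4 + lam ^ 2 := by
  refine (norm_add_le _ _).trans_eq ?_
  simp

theorem norm_le_of_sq_add_sq_add_sq_sub_mul_eq {x y z w : ℂ}
    (h : x ^ 2 + y ^ 2 + z ^ 2 - x * y * z = w) (hy : ‖y‖ ≤ c) (hz : ‖z‖ ≤ c) :
    ‖x‖ ≤ 2 + 2 * c ^ 2 + ‖w‖ := by
  have hx2 : x ^ 2 = w - y ^ 2 - z ^ 2 + x * (y * z) := by linear_combination h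
  have hquad : ‖x‖ ^ 2 ≤ ‖w‖ + c ^ 2 + c ^ 2 + ‖x‖ * (c * c) := calc
    ‖x‖ ^ 2 = ‖w - y ^ 2 - z ^ 2 + x * (y * z)‖ := by rw [← norm_pow, hx2]
    _ ≤ ‖w‖ + ‖y‖ ^ 2 + ‖z‖ ^ 2 + ‖x‖ * (‖y‖ * ‖z‖) := by
        rw [← norm_pow, ← norm_pow, ← norm_mul y, ← norm_mul x]
        exact norm_add_le_of_le (norm_sub_le_of_le (norm_sub_le _ _) le_rfl) le_rfl
    _ ≤ ‖w‖ + c ^ 2 + c ^ 2 + ‖x‖ * (c * c) := by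
        gcongr
        exact (norm_nonneg y).trans hy
  by_contra! hlt
  nlinarith [norm_nonneg x, norm_nonneg w, sq_nonneg c]

theorem norm_trace_le_of_frickeVogt_eq (h : frickeVogt A B = 4 + (lam : ℂ) ^ 2)
    (hB : ‖A.trace‖ ≤ 2 ∨ ‖B.trace‖ ≤ 2) (hAB : ‖A.trace‖ ≤ 2 ∨ ‖(A * B).trace‖ ≤ 2) :
    ‖A.trace‖ ≤ 14 + lam ^ 2 := by
  by_cases hA : ‖A.trace‖ ≤ 2
  · nlinarith [sq_nonneg lam]
  · have := norm_le_of_sq_add_sq_add_sq_sub_mul_eq h (hB.resolve_left hA) (hAB.resolve_left hA)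
    have hw : ‖(4 : ℂ) + (lam : ℂ) ^ 2‖ ≤ 4 + lam ^ 2 := norm_four_add_sq_le lam
    linarith

theorem norm_trace_mul_le_of_frickeVogt_eq (h : frickeVogt A B = 4 + (lam : ℂ) ^ 2)
    (hA : ‖A.trace‖ ≤ c) (hB : ‖B.trace‖ ≤ c) :
    ‖(A * B).trace‖ ≤ 6 + 2 * c ^ 2 + lam ^ 2 := by
  have hrot : (A * B).trace ^ 2 + A.trace ^ 2 + B.trace ^ 2 - (A * B).trace * A.trace * B.trace =
      4 + (lam : ℂ) ^ 2 := by
    rw [← h, frickeVogt]; ring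
  linarith [norm_le_of_sq_add_sq_add_sq_sub_mul_eq hrot hA hB, norm_four_add_sq_le lam]

end FrickeVogtBounds

section Norms

theorem norm_apply_le_l2_opNorm {m n : Type*} [Fintype m] [Fintype n] [DecidableEq n]
    (A : Matrix m n ℂ) (i : m) (j : n) : ‖A i j‖ ≤ ‖A‖ := by
  have hcol := Matrix.l2_opNorm_mulVec A (EuclideanSpace.single j 1)
  rw [PiLp.norm_single, norm_one, mul_one] at hcol
  refine le_trans ?_ hcol
  simpa using PiLp.norm_apply_le (WithLp.toLp 2 (A.mulVec (EuclideanSpace.single j (1 : ℂ)))) i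

theorem norm_trace_le (A : Matrix (Fin 2) (Fin 2) ℂ) : ‖A.trace‖ ≤ 2 * ‖A‖ := by
  rw [Matrix.trace_fin_two, two_mul]
  exact norm_add_le_of_le (norm_apply_le_l2_opNorm A 0 0) (norm_apply_le_l2_opNorm A 1 1)

theorem norm_adjugate_le (A : Matrix (Fin 2) (Fin 2) ℂ) : ‖A.adjugate‖ ≤ 3 * ‖A‖ := by
  have hadj : A.adjugate = A.trace • 1 - A := by
    rw [Matrix.adjugate_fin_two]
    ext i j
    fin_cases i <;> fin_cases j <;> simp [Matrix.trace_fin_two]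
  calc ‖A.adjugate‖ ≤ ‖A.trace‖ * ‖(1 : Matrix (Fin 2) (Fin 2) ℂ)‖ + ‖A‖ := by
        rw [hadj, ← norm_smul]; exact norm_sub_le _ _
    _ ≤ 3 * ‖A‖ := by rw [CStarRing.norm_one]; linarith [norm_trace_le A]

end Norms

/-! ### Transfer matrices -/

section TransferMatrices

variable {lam : ℝ} {E : ℂ}

theorem transferM_append (u w : List ℝ) :
    transferM lam E (u ++ w) = transferM lam E w * transferM lam E u := by
  induction u with
  | nil => rw [List.nil_append, transferM, mul_one]
  | cons a u ih => rw [List.cons_append, transferM, transferM, ih, mul_assoc]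

theorem det_transferM (w : List ℝ) : (transferM lam E w).det = 1 := by
  induction w with
  | nil => rw [transferM, Matrix.det_one]
  | cons a u ih => simp [transferM, ih, transferT, Matrix.det_fin_two_of]

theorem norm_transferT_le {a : ℝ} (ha : |a| ≤ 1) : ‖transferT lam E a‖ ≤ ‖E‖ + |lam| + 1 := by
  have hdecomp : transferT lam E a =
      Matrix.diagonal ![E - lam * a, 0] + (!![0, -1; 1, 0] : Matrix (Fin 2) (Fin 2) ℂ) := by
    ext i j
    fin_cases i <;> fin_cases j <;> simp [transferT]
  have hrot : (!![0, -1; 1, 0] : Matrix (Fin 2) (Fin 2) ℂ) ∈ Matrix.unitaryGroup (Fin 2) ℂ := by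
    rw [Matrix.mem_unitaryGroup_iff]
    ext i j
    fin_cases i <;> fin_cases j <;> simp [Matrix.mul_apply, Matrix.star_eq_conjTranspose]
  have hdiag : ‖(![E - lam * a, 0] : Fin 2 → ℂ)‖ ≤ ‖E‖ + |lam| := by
    refine (pi_norm_le_iff_of_nonneg (by positivity)).2 fun i => ?_
    fin_cases i
    · refine norm_sub_le_of_le le_rfl ?_
      rw [norm_mul, Complex.norm_real, Complex.norm_real, Real.norm_eq_abs, Real.norm_eq_abs]
      exact mul_le_of_le_one_right (abs_nonneg lam) ha
    · simpa using by positivity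
  rw [hdecomp]
  refine norm_add_le_of_le ?_ (CStarRing.norm_of_mem_unitary hrot).le
  rwa [Matrix.l2_opNorm_diagonal]

theorem norm_transferM_le {w : List ℝ} (hw : ∀ a ∈ w, |a| ≤ 1) :
    ‖transferM lam E w‖ ≤ (‖E‖ + |lam| + 1) ^ w.length := by
  induction w with
  | nil => rw [transferM, CStarRing.norm_one, List.length_nil, pow_zero]
  | cons a u ih =>
    rw [List.forall_mem_cons] at hw
    rw [transferM, List.length_cons, pow_succ]
    exact norm_mul_le_of_le (ih hw.2) (norm_transferT_le hw.1)

theorem norm_transferM_infix_le {w : List ℝ} {c : ℝ}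
    (hw : ∀ x, x <:+ w → ‖transferM lam E x‖ ≤ c) {F : List ℝ} (hF : F <:+: w) :
    ‖transferM lam E F‖ ≤ 3 * c ^ 2 := by
  obtain ⟨p, q, rfl⟩ := hF
  have hc : 0 ≤ c := (norm_nonneg _).trans (hw [] (List.nil_suffix))
  have hq : ‖transferM lam E q‖ ≤ c := hw q (List.suffix_append _ _)
  have hFq : ‖transferM lam E (F ++ q)‖ ≤ c := hw _ ⟨p, by rw [List.append_assoc]⟩
  have hcancel : transferM lam E F = (transferM lam E q).adjugate * transferM lam E (F ++ q) := by
    rw [transferM_append, ← mul_assoc, Matrix.adjugate_mul, det_transferM, one_smul, one_mul]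
  calc ‖transferM lam E F‖ ≤ 3 * ‖transferM lam E q‖ * ‖transferM lam E (F ++ q)‖ := by
        rw [hcancel]
        exact norm_mul_le_of_le (norm_adjugate_le _) le_rfl
    _ ≤ 3 * c * c := by gcongr
    _ = 3 * c ^ 2 := by ring

theorem suffix_append_cases {β : Type*} {x u w : List β} (h : x <:+ u ++ w) :
    x <:+ w ∨ ∃ s, s <:+ u ∧ x = s ++ w := by
  obtain ⟨p, hp⟩ := h
  rcases List.append_eq_append_iff.1 hp with ⟨c, hu, hx⟩ | ⟨c, -, hw⟩
  · exact Or.inr ⟨c, ⟨p, hu.symm⟩, hx⟩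
  · exact Or.inl ⟨c, hw.symm⟩

theorem norm_transferM_suffix_append_le {u w : List ℝ} {b : ℝ} (hb : 1 ≤ b)
    (hu : ∀ x, x <:+ u → ‖transferM lam E x‖ ≤ b) (hw : ∀ x, x <:+ w → ‖transferM lam E x‖ ≤ b)
    {x : List ℝ} (hx : x <:+ u ++ w) : ‖transferM lam E x‖ ≤ b ^ 2 := by
  rcases suffix_append_cases hx with hxw | ⟨s, hs, rfl⟩
  · exact (hw x hxw).trans (le_self_pow₀ hb two_ne_zero)
  · rw [transferM_append, sq]
    exact norm_mul_le_of_le (hw w List.suffix_rfl) (hu s hs)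

end TransferMatrices

/-! ### Crossing an integer -/

/-- The signed shift by `δ` moves `y` across an integer, i.e. across the point `0` of the circle. -/
def Crosses (δ y : ℝ) : Prop := ⌊y + δ⌋ ≠ ⌊y⌋

section Crosses

variable {δ δ' y : ℝ}

theorem crosses_iff : Crosses δ y ↔ ∃ r : ℤ, y < r ∧ r ≤ y + δ ∨ y + δ < r ∧ r ≤ y := by
  constructor
  · intro h
    rcases lt_or_gt_of_ne h with hlt | hlt
    · exact ⟨⌊y⌋, Or.inr ⟨Int.floor_lt.1 hlt, Int.floor_le y⟩⟩
    · exact ⟨⌊y + δ⌋, Or.inl ⟨Int.floor_lt.1 hlt, Int.floor_le _⟩⟩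
  · rintro ⟨r, ⟨h₁, h₂⟩ | ⟨h₁, h₂⟩⟩ <;> rw [← Int.floor_lt] at h₁ <;> rw [← Int.le_floor] at h₂
    · exact (h₁.trans_le h₂).ne'
    · exact (h₁.trans_le h₂).ne

theorem crosses_add_intCast (r : ℤ) : Crosses δ (y + r) ↔ Crosses δ y := by
  rw [Crosses, add_right_comm, Int.floor_add_intCast, Int.floor_add_intCast, ne_eq, add_left_inj]
  rfl

theorem crosses_neg_add : Crosses (-δ) (y + δ) ↔ Crosses δ y := by
  rw [Crosses, add_neg_cancel_right]
  exact ne_comm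

theorem Crosses.mono (h : Crosses δ y) (hδ : δ ∈ Set.uIcc 0 δ') : Crosses δ' y := by
  rw [crosses_iff] at h ⊢
  obtain ⟨r, ⟨h₁, h₂⟩ | ⟨h₁, h₂⟩⟩ := h <;> rcases Set.mem_uIcc.1 hδ with hδ | hδ
  · exact ⟨r, Or.inl ⟨h₁, by linarith⟩⟩
  · linarith
  · linarith
  · exact ⟨r, Or.inr ⟨by linarith, h₂⟩⟩

theorem Crosses.not_crosses_of_mul_neg (h : Crosses δ y) (hneg : δ * δ' < 0)
    (hle : |δ| + |δ'| ≤ 1) : ¬ Crosses δ' y := by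
  have hone : |δ - δ'| ≤ 1 := (abs_sub _ _).trans hle
  rw [abs_le] at hone
  intro h'
  rw [crosses_iff] at h h'
  obtain ⟨r, hr⟩ := h
  obtain ⟨s, hs⟩ := h'
  have hrs : |r - s| < 1 := by
    rw [← @Int.cast_lt ℝ, Int.cast_abs, Int.cast_sub, Int.cast_one, abs_lt]
    rcases mul_neg_iff.1 hneg with hsgn | hsgn <;> rcases hr with hr | hr <;>
      rcases hs with hs | hs <;> constructor <;> linarith
  obtain rfl : r = s := sub_eq_zero.1 (Int.abs_lt_one_iff.1 hrs)
  rcases mul_neg_iff.1 hneg with hsgn | hsgn <;> rcases hr with hr | hr <;>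
    rcases hs with hs | hs <;> linarith

theorem exists_sub_intCast_mem_uIoo {t : ℝ} (h : Crosses δ y) (h' : Crosses δ' (y - t))
    (hneg : δ * δ' < 0) : ∃ r : ℤ, t - r ∈ Set.uIoo 0 (δ' - δ) := by
  rw [crosses_iff] at h h'
  obtain ⟨r, hr⟩ := h
  obtain ⟨s, hs⟩ := h'
  refine ⟨r - s, ?_⟩
  rw [Int.cast_sub]
  rcases mul_neg_iff.1 hneg with hsgn | hsgn
  · rw [Set.uIoo_of_gt (by linarith)]
    rcases hr with hr | hr <;> rcases hs with hs | hs <;> constructor <;> linarith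
  · rw [Set.uIoo_of_lt (by linarith)]
    rcases hr with hr | hr <;> rcases hs with hs | hs <;> constructor <;> linarith

/-- The `q`-th iterate of the rotation moves every point by `δ`, so repeating it eventually carries
the orbit across an integer. -/
theorem exists_crosses_add_mul {α : ℝ} {q : ℕ} {r : ℤ} (hδ : δ ≠ 0) (hq : q * α = r + δ) (y : ℝ) :
    ∃ j : ℕ, Crosses δ (y + j * α) := by
  by_contra! hnot
  have hfloor (k : ℕ) : ⌊y + k * δ⌋ = ⌊y⌋ := by
    induction k with
    | zero => rw [Nat.cast_zero, zero_mul, add_zero]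
    | succ k ih =>
      have hk : y + (k * q : ℕ) * α = y + k * δ + (k * r : ℤ) := by
        push_cast
        linear_combination (k : ℝ) * hq
      have := hnot (k * q)
      rw [hk, crosses_add_intCast, Crosses, not_not] at this
      rw [← ih, ← this]
      push_cast
      ring_nf
  obtain ⟨k, hk⟩ := Archimedean.arch 1 (abs_pos.2 hδ)
  have := Int.abs_sub_lt_one_of_floor_eq_floor (hfloor k)
  rw [add_sub_cancel_left, abs_mul, Nat.abs_cast, ← nsmul_eq_mul] at this
  exact this.not_ge hk

end Crosses

/-! ### The coding of a rotation -/

/-- The coding of the circle by the arcs `[0, α)` and `[α - 1, 0)` (modulo `1`), as `1` and `0`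
respectively; the Sturmian potential reads it along an orbit of the rotation by `α`. -/
def letter (α y : ℝ) : ℝ := ((⌊y⌋ - ⌊y - α⌋ : ℤ) : ℝ)

/-- The word of length `n` read from `y` along the rotation by `α`. -/
def wordAt (α y : ℝ) (n : ℕ) : List ℝ := (List.range n).map fun i : ℕ => letter α (y + i * α)

/-- The letter read just before the shift by a small `δ` crosses an integer. -/
def side (δ : ℝ) : ℝ := if 0 < δ then 0 else 1

section Coding

variable {α δ δ' y : ℝ}

theorem letter_add_intCast (r : ℤ) : letter α (y + r) = letter α y := by
  rw [letter, letter, add_sub_right_comm, Int.floor_add_intCast, Int.floor_add_intCast,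
    add_sub_add_right_eq_sub]

theorem letter_eq_one (hα : α ≤ 1) {r : ℤ} (h₁ : r ≤ y) (h₂ : y < r + α) : letter α y = 1 := by
  have hy : ⌊y⌋ = r := Int.floor_eq_iff.2 ⟨h₁, by linarith⟩
  have hyα : ⌊y - α⌋ = r - 1 := Int.floor_eq_iff.2 (by push_cast; constructor <;> linarith)
  rw [letter, hy, hyα, sub_sub_cancel, Int.cast_one]

theorem letter_eq_zero (hα : 0 ≤ α) {r : ℤ} (h₁ : r + α - 1 ≤ y) (h₂ : y < r) :
    letter α y = 0 := by
  have hy : ⌊y⌋ = r - 1 := Int.floor_eq_iff.2 (by push_cast; constructor <;> linarith)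
  have hyα : ⌊y - α⌋ = r - 1 := Int.floor_eq_iff.2 (by push_cast; constructor <;> linarith)
  rw [letter, hy, hyα, sub_self, Int.cast_zero]

theorem letter_add_eq_letter (h : ¬ Crosses δ y) (hα : ¬ Crosses δ (y - α)) :
    letter α (y + δ) = letter α y := by
  rw [Crosses, not_not] at h hα
  rw [letter, letter, add_sub_right_comm, h, hα]

theorem side_eq_side (h : 0 < δ * δ') : side δ = side δ' := by
  rcases mul_pos_iff.1 h with ⟨h₁, h₂⟩ | ⟨h₁, h₂⟩
  · rw [side, side, if_pos h₁, if_pos h₂]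
  · rw [side, side, if_neg h₁.not_gt, if_neg h₂.not_gt]

theorem Crosses.letter_add (h : Crosses δ y) (hα : α ∈ Set.Icc 0 1)
    (hδ : δ ∈ Set.Icc (α - 1) α) : letter α (y + δ) = side (-δ) := by
  obtain ⟨hδ₁, hδ₂⟩ := hδ
  obtain ⟨hα₀, hα₁⟩ := hα
  rw [crosses_iff] at h
  obtain ⟨r, ⟨h₁, h₂⟩ | ⟨h₁, h₂⟩⟩ := h
  · rw [side, if_neg (by linarith), letter_eq_one hα₁ h₂ (by linarith)]
  · rw [side, if_pos (by linarith), letter_eq_zero hα₀ (r := r) (by linarith) h₁]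

theorem Crosses.letter_eq (h : Crosses δ y) (hα : α ∈ Set.Icc 0 1)
    (hδ : -δ ∈ Set.Icc (α - 1) α) : letter α y = side δ := by
  simpa only [neg_neg, add_neg_cancel_right] using (crosses_neg_add.2 h).letter_add hα hδ

theorem wordAt_one : wordAt α y 1 = [letter α y] := by
  rw [wordAt, List.range_one, List.map_singleton, Nat.cast_zero, zero_mul, add_zero]

theorem wordAt_add (m n : ℕ) :
    wordAt α y (m + n) = wordAt α y m ++ wordAt α (y + m * α) n := by
  rw [wordAt, List.range_add, List.map_append, List.map_map]
  congr 1
  refine List.map_congr_left fun i _ => ?_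
  rw [Function.comp_apply]
  push_cast
  ring_nf

theorem wordAt_add_intCast (r : ℤ) (n : ℕ) : wordAt α (y + r) n = wordAt α y n := by
  refine List.map_congr_left fun i _ => ?_
  rw [add_right_comm, letter_add_intCast]

theorem sturmian_eq_letter (hα : α ∈ Set.Icc 0 1) (θ : ℝ) (n : ℤ) :
    sturmian α θ n = letter α (n * α + θ + α) := by
  have hfract := Int.floor_add_fract (n * α + θ)
  rw [sturmian]
  split_ifs with h
  · refine (letter_eq_one (r := ⌊n * α + θ⌋ + 1) hα.2 ?_ ?_).symm <;> push_cast <;>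
      linarith [h.1, h.2]
  · have hlt : Int.fract (n * α + θ) < 1 - α := by
      by_contra! hge
      exact h ⟨hge, Int.fract_lt_one _⟩
    refine (letter_eq_zero (r := ⌊n * α + θ⌋ + 1) hα.1 ?_ ?_).symm <;> push_cast <;>
      linarith [Int.fract_nonneg (n * α + θ)]

theorem sturmianWord_eq_wordAt (hα : α ∈ Set.Icc 0 1) (θ : ℝ) (n : ℕ) :
    sturmianWord α θ n = wordAt α (θ + 2 * α) n := by
  -- `sturmianWord` takes integers `k`, so its `List.range n` is coerced by the monadic lift.
  rw [sturmianWord, show (do let k ← List.range n; pure (k : ℤ)) = (List.range n).map Nat.cast from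
    List.flatMap_pure_eq_map _ _, List.map_map]
  refine List.map_congr_left fun i _ => ?_
  rw [Function.comp_apply, sturmian_eq_letter hα]
  push_cast
  ring_nf

theorem abs_sturmian_le_one (θ : ℝ) (n : ℤ) : |sturmian α θ n| ≤ 1 := by
  rw [sturmian]
  split_ifs
  · rw [abs_one]
  · rw [abs_zero]; exact zero_le_one

section Trace

variable {lam : ℝ} {E : ℂ} {q : ℕ}

theorem trace_transferM_wordAt_add (h : letter α (y + q * α) = letter α y) :
    (transferM lam E (wordAt α (y + α) q)).trace = (transferM lam E (wordAt α y q)).trace := by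
  have hfront : transferM lam E (wordAt α y (q + 1)) =
      transferM lam E (wordAt α (y + α) q) * transferM lam E [letter α y] := by
    rw [add_comm, wordAt_add, wordAt_one, transferM_append, Nat.cast_one, one_mul]
  have hback : transferM lam E (wordAt α y (q + 1)) =
      transferM lam E [letter α y] * transferM lam E (wordAt α y q) := by
    rw [wordAt_add, wordAt_one, transferM_append, h]
  have hunit : IsUnit (transferM lam E [letter α y]) :=
    (Matrix.isUnit_iff_isUnit_det _).2 (by rw [det_transferM]; exact isUnit_one)
  obtain ⟨T, hT⟩ := hunit
  rw [← hT] at hfront hback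
  rw [← (Units.mul_inv_eq_iff_eq_mul T).2 hfront, hback, Matrix.trace_mul_comm,
    ← mul_assoc, Units.inv_mul, one_mul]

theorem trace_transferM_wordAt_orbit (j : ℕ)
    (h : ∀ i < j, letter α (y + i * α + q * α) = letter α (y + i * α)) :
    (transferM lam E (wordAt α (y + j * α) q)).trace =
      (transferM lam E (wordAt α y q)).trace := by
  induction j with
  | zero => rw [Nat.cast_zero, zero_mul, add_zero]
  | succ j ih =>
    rw [← ih fun i hi => h i (hi.trans j.lt_succ_self),
      ← trace_transferM_wordAt_add (h j j.lt_succ_self), Nat.cast_succ, add_one_mul, add_assoc]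

end Trace

end Coding

/-! ### Pairs of return words -/

/-- A word together with the signed displacement, modulo `1`, of the rotation while reading it. -/
structure Block where
  word : List ℝ
  shift : ℝ

/-- Reading `A`, then `B`. -/
instance : Append Block := ⟨fun A B => ⟨A.word ++ B.word, A.shift + B.shift⟩⟩

namespace Block

theorem word_append (A B : Block) : (A ++ B).word = A.word ++ B.word := rfl

theorem shift_append (A B : Block) : (A ++ B).shift = A.shift + B.shift := rfl

theorem length_append (A B : Block) :
    (A ++ B).word.length = A.word.length + B.word.length := List.length_append

end Block

/-- `A` is one of the two words returning to the arc of length `|A.shift - B.shift|` around the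
point `0` of the circle, `B` being the other one: `A` is read from every point of that arc on its
side of `0`, and the orbit is outside the arc in between. -/
structure IsReturnBlock (α : ℝ) (A B : Block) : Prop where
  length_pos : 0 < A.word.length
  shift_mem : A.shift ∈ Set.Icc (α - 1) α
  shift_eq : ∃ r : ℤ, A.word.length * α = r + A.shift
  wordAt_eq : ∀ y, Crosses (A.shift - B.shift) y → letter α y = side A.shift →
    wordAt α y A.word.length = A.word
  gap : ∀ m, 0 < m → m < A.word.length → ∀ r : ℤ,
    m * α - r ∉ Set.uIoo 0 (A.shift - B.shift)

/-- The two return words `A` and `B` of an arc around `0`.  They shift points in opposite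
directions, and the towers over the two parts of the arc cover the circle; `area_eq` says that the
total length of the floors of the towers is `1`. -/
structure IsBlockPair (α : ℝ) (A B : Block) : Prop where
  left : IsReturnBlock α A B
  right : IsReturnBlock α B A
  shift_mul_neg : A.shift * B.shift < 0
  area_eq : A.word.length * |B.shift| + B.word.length * |A.shift| = 1
  cover : ∀ y, ∃ i : ℕ, Crosses (-B.shift) (y - i * α) ∧ i < A.word.length ∨
    Crosses (-A.shift) (y - i * α) ∧ i < B.word.length

section Blocks

variable {α : ℝ} {A B : Block}

theorem uIcc_zero_subset_of_mul_neg {x y : ℝ} (h : x * y < 0) :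
    Set.uIcc 0 x ⊆ Set.uIcc 0 (x - y) := by
  refine Set.uIcc_subset_uIcc_left (Set.mem_uIcc.2 ?_)
  rcases mul_neg_iff.1 h with h | h
  · exact Or.inl ⟨h.1.le, by linarith⟩
  · exact Or.inr ⟨by linarith, h.1.le⟩

theorem uIoo_zero_subset_of_mem_uIcc {x y : ℝ} (h : x ∈ Set.uIcc 0 y) :
    Set.uIoo 0 x ⊆ Set.uIoo 0 y :=
  Set.uIoo_subset_Ioo Set.left_mem_uIcc h

theorem mem_uIoo_zero_neg_of_add_mem {x δ : ℝ} (h : x + δ ∈ Set.uIoo 0 δ) :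
    x ∈ Set.uIoo 0 (-δ) := by
  rcases lt_or_ge δ 0 with hδ | hδ
  · rw [Set.uIoo_of_gt hδ] at h
    exact Set.mem_uIoo_of_lt (by linarith [h.1]) (by linarith [h.2])
  · rw [Set.uIoo_of_le hδ] at h
    exact Set.mem_uIoo_of_gt (by linarith [h.1]) (by linarith [h.2])

theorem abs_lt_abs_of_mem_uIoo_zero {x δ : ℝ} (h : x ∈ Set.uIoo 0 δ) : |x| < |δ| := by
  rcases lt_or_ge δ 0 with hδ | hδ
  · rw [Set.uIoo_of_gt hδ] at h
    rw [abs_of_neg h.2, abs_of_neg hδ]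
    linarith [h.1]
  · rw [Set.uIoo_of_le hδ] at h
    rw [abs_of_pos h.1, abs_of_nonneg hδ]
    exact h.2

theorem IsReturnBlock.wordAt_add_length (hA : IsReturnBlock α A B) (y : ℝ) (n : ℕ) :
    wordAt α (y + A.word.length * α) n = wordAt α (y + A.shift) n := by
  obtain ⟨r, hr⟩ := hA.shift_eq
  rw [hr, add_comm (r : ℝ), ← add_assoc, wordAt_add_intCast]

theorem IsReturnBlock.crosses_sub_add_length (hA : IsReturnBlock α A B) {δ : ℝ} (y : ℝ) :
    Crosses δ (y - A.word.length * α) ↔ Crosses δ (y - A.shift) := by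
  obtain ⟨r, hr⟩ := hA.shift_eq
  rw [hr, ← crosses_add_intCast r, sub_add, add_sub_cancel_left]

namespace IsBlockPair

theorem symm (h : IsBlockPair α A B) : IsBlockPair α B A where
  left := h.right
  right := h.left
  shift_mul_neg := by rw [mul_comm]; exact h.shift_mul_neg
  area_eq := by rw [add_comm]; exact h.area_eq
  cover y := (h.cover y).imp fun _ => Or.symm

theorem abs_add_abs_le_one (h : IsBlockPair α A B) : |A.shift| + |B.shift| ≤ 1 := by
  obtain ⟨hA₁, hA₂⟩ := h.left.shift_mem
  obtain ⟨hB₁, hB₂⟩ := h.right.shift_mem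
  rcases mul_neg_iff.1 h.shift_mul_neg with ⟨hA, hB⟩ | ⟨hA, hB⟩
  · rw [abs_of_pos hA, abs_of_neg hB]; linarith
  · rw [abs_of_neg hA, abs_of_pos hB]; linarith

theorem shift_ne_zero (h : IsBlockPair α A B) : A.shift ≠ 0 :=
  left_ne_zero_of_mul h.shift_mul_neg.ne

theorem mem_Icc (h : IsBlockPair α A B) : α ∈ Set.Icc 0 1 := by
  obtain ⟨hA₁, hA₂⟩ := h.left.shift_mem
  obtain ⟨hB₁, hB₂⟩ := h.right.shift_mem
  rcases mul_neg_iff.1 h.shift_mul_neg with ⟨hA, hB⟩ | ⟨hA, hB⟩ <;> constructor <;> linarith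

theorem side_neg_shift (h : IsBlockPair α A B) : side (-B.shift) = side A.shift :=
  side_eq_side (by linarith [h.shift_mul_neg])

theorem not_crosses_of_crosses (h : IsBlockPair α A B) {y : ℝ} (hA : Crosses A.shift y) :
    ¬ Crosses B.shift y :=
  hA.not_crosses_of_mul_neg h.shift_mul_neg h.abs_add_abs_le_one

theorem uIcc_zero_shift_subset (h : IsBlockPair α A B) :
    Set.uIcc 0 A.shift ⊆ Set.uIcc 0 (A.shift - B.shift) :=
  uIcc_zero_subset_of_mul_neg h.shift_mul_neg

theorem neg_shift_mem_uIcc (h : IsBlockPair α A B) :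
    -B.shift ∈ Set.uIcc 0 (A.shift - B.shift) := by
  have := uIcc_zero_subset_of_mul_neg (x := -B.shift) (y := -A.shift)
    (by linarith [h.shift_mul_neg]) Set.right_mem_uIcc
  rwa [neg_sub_neg] at this

theorem wordAt_eq_of_crosses (h : IsBlockPair α A B) {y : ℝ} (hy : Crosses (-B.shift) y) :
    wordAt α y A.word.length = A.word := by
  refine h.left.wordAt_eq y (hy.mono h.neg_shift_mem_uIcc) ?_
  rw [← h.side_neg_shift]
  exact hy.letter_eq h.mem_Icc (by rw [neg_neg]; exact h.right.shift_mem)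

theorem crosses_add_shift (h : IsBlockPair α A B) {y : ℝ} (hy : Crosses (-B.shift) y) :
    Crosses (-B.shift) (y + A.shift) ∨ Crosses (-A.shift) (y + A.shift) := by
  refine or_iff_not_imp_right.2 fun hA => ?_
  rw [crosses_neg_add, Crosses, not_not] at hA
  have := hy.mono h.neg_shift_mem_uIcc
  rwa [Crosses, ← hA, sub_eq_add_neg, ← add_assoc] at this

theorem isReturnBlock_left_append (h : IsBlockPair α A B) : IsReturnBlock α A (B ++ A) := by
  have hsub : A.shift - (B ++ A).shift = -B.shift := by rw [Block.shift_append]; ring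
  refine ⟨h.left.length_pos, h.left.shift_mem, h.left.shift_eq, ?_, ?_⟩ <;> rw [hsub]
  · exact fun y hy => h.left.wordAt_eq y (hy.mono h.neg_shift_mem_uIcc)
  · exact fun m hm hmA r hr =>
      h.left.gap m hm hmA r (uIoo_zero_subset_of_mem_uIcc h.neg_shift_mem_uIcc hr)

theorem shift_append_mem_uIcc (h : IsBlockPair α A B) (hlt : |A.shift| < |B.shift|) :
    (B ++ A).shift ∈ Set.uIcc 0 B.shift := by
  rw [Block.shift_append, Set.mem_uIcc]
  rcases mul_neg_iff.1 h.shift_mul_neg with ⟨hA, hB⟩ | ⟨hA, hB⟩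
  · rw [abs_of_pos hA, abs_of_neg hB] at hlt
    exact Or.inr ⟨by linarith, by linarith⟩
  · rw [abs_of_neg hA, abs_of_pos hB] at hlt
    exact Or.inl ⟨by linarith, by linarith⟩

theorem abs_shift_append (h : IsBlockPair α A B) (hlt : |A.shift| < |B.shift|) :
    |(B ++ A).shift| = |B.shift| - |A.shift| := by
  rw [Block.shift_append]
  rcases mul_neg_iff.1 h.shift_mul_neg with ⟨hA, hB⟩ | ⟨hA, hB⟩
  · rw [abs_of_pos hA, abs_of_neg hB] at hlt ⊢
    rw [abs_of_neg (by linarith)]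
    ring
  · rw [abs_of_neg hA, abs_of_pos hB] at hlt ⊢
    rw [abs_of_pos (by linarith)]
    ring

theorem shift_mul_shift_append_pos (h : IsBlockPair α A B) (hlt : |A.shift| < |B.shift|) :
    0 < (B ++ A).shift * B.shift := by
  rw [Block.shift_append]
  nlinarith [sq_lt_sq.2 hlt, h.shift_mul_neg]

theorem wordAt_append (h : IsBlockPair α A B) {y : ℝ} (hy : Crosses B.shift y)
    (hside : letter α y = side B.shift) :
    wordAt α y (B ++ A).word.length = (B ++ A).word := by
  have hB : wordAt α y B.word.length = B.word :=
    h.right.wordAt_eq y (hy.mono (h.symm.uIcc_zero_shift_subset Set.right_mem_uIcc)) hside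
  have hcross : Crosses (A.shift - B.shift) (y + B.shift) := by
    have hA := h.symm.not_crosses_of_crosses hy
    rw [Crosses, not_not] at hA
    rw [Crosses, add_assoc, add_sub_cancel, hA]
    exact hy.symm
  have hA : wordAt α (y + B.shift) A.word.length = A.word := by
    refine h.left.wordAt_eq _ hcross ?_
    rw [hy.letter_add h.mem_Icc h.right.shift_mem, h.side_neg_shift]
  rw [Block.length_append, wordAt_add, h.right.wordAt_add_length, hB, hA, Block.word_append]

theorem gap_append (h : IsBlockPair α A B) (m : ℕ) (hm : 0 < m)
    (hlt : m < (B ++ A).word.length) (r : ℤ) : m * α - r ∉ Set.uIoo 0 B.shift := by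
  intro hr
  rcases lt_trichotomy m B.word.length with hmB | rfl | hmB
  · exact h.right.gap m hm hmB r (uIoo_zero_subset_of_mem_uIcc
      (h.symm.uIcc_zero_shift_subset Set.right_mem_uIcc) hr)
  all_goals obtain ⟨s, hs⟩ := h.right.shift_eq
  · rw [hs, add_sub_right_comm, ← Int.cast_sub] at hr
    have hmem := mem_uIoo_zero_neg_of_add_mem hr
    have hone : |((s - r : ℤ) : ℝ)| < 1 := (abs_lt_abs_of_mem_uIoo_zero hmem).trans_le <| by
      rw [abs_neg]
      exact (le_add_of_nonneg_left (abs_nonneg A.shift)).trans h.abs_add_abs_le_one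
    rw [← Int.cast_abs, ← Int.cast_one, Int.cast_lt] at hone
    rw [Int.abs_lt_one_iff.1 hone, Int.cast_zero] at hmem
    exact Set.left_notMem_uIoo hmem
  · obtain ⟨k, rfl⟩ := Nat.exists_eq_add_of_lt hmB
    rw [Block.length_append] at hlt
    refine h.left.gap (k + 1) k.succ_pos (by omega) (r - s)
      (uIoo_zero_subset_of_mem_uIcc h.neg_shift_mem_uIcc (mem_uIoo_zero_neg_of_add_mem ?_))
    convert hr using 1
    push_cast
    linear_combination -hs

theorem isReturnBlock_append (h : IsBlockPair α A B) (hlt : |A.shift| < |B.shift|) :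
    IsReturnBlock α (B ++ A) A := by
  have hsub : (B ++ A).shift - A.shift = B.shift := by rw [Block.shift_append]; ring
  refine ⟨?_, ?_, ?_, ?_, ?_⟩
  · rw [Block.length_append]
    exact Nat.add_pos_left h.right.length_pos _
  · have h0 : (0 : ℝ) ∈ Set.Icc (α - 1) α := by
      obtain ⟨h0, h1⟩ := h.mem_Icc
      exact ⟨by linarith, h0⟩
    exact Set.uIcc_subset_Icc h0 h.right.shift_mem (h.shift_append_mem_uIcc hlt)
  · obtain ⟨r, hr⟩ := h.left.shift_eq
    obtain ⟨s, hs⟩ := h.right.shift_eq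
    refine ⟨s + r, ?_⟩
    rw [Block.length_append, Block.shift_append]
    push_cast
    linear_combination hr + hs
  · intro y hy hside
    rw [hsub] at hy
    exact h.wordAt_append hy (hside.trans (side_eq_side (h.shift_mul_shift_append_pos hlt)))
  · rw [hsub]
    exact h.gap_append

theorem cover_append (h : IsBlockPair α A B) (y : ℝ) :
    ∃ i : ℕ, Crosses (-(B ++ A).shift) (y - i * α) ∧ i < A.word.length ∨
      Crosses (-A.shift) (y - i * α) ∧ i < (B ++ A).word.length := by
  rw [Block.length_append]
  obtain ⟨i, ⟨hB, hi⟩ | ⟨hA, hi⟩⟩ := h.cover y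
  · by_cases hBA : Crosses (-(B ++ A).shift) (y - i * α)
    · exact ⟨i, Or.inl ⟨hBA, hi⟩⟩
    · refine ⟨i + B.word.length, Or.inr ⟨?_, by omega⟩⟩
      rw [Nat.cast_add, add_mul, ← sub_sub, h.right.crosses_sub_add_length]
      rw [Crosses, not_not, Block.shift_append, neg_add, ← add_assoc] at hBA
      rw [Crosses, sub_eq_add_neg _ B.shift, hBA]
      exact hB.symm
  · exact ⟨i, Or.inr ⟨hA, by omega⟩⟩

theorem append (h : IsBlockPair α A B) (hlt : |A.shift| < |B.shift|) :
    IsBlockPair α A (B ++ A) where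
  left := h.isReturnBlock_left_append
  right := h.isReturnBlock_append hlt
  shift_mul_neg := by
    rw [Block.shift_append]
    rcases mul_neg_iff.1 h.shift_mul_neg with ⟨hA, hB⟩ | ⟨hA, hB⟩
    · rw [abs_of_pos hA, abs_of_neg hB] at hlt
      exact mul_neg_of_pos_of_neg hA (by linarith)
    · rw [abs_of_neg hA, abs_of_pos hB] at hlt
      exact mul_neg_of_neg_of_pos hA (by linarith)
  area_eq := by
    rw [h.abs_shift_append hlt, Block.length_append, ← h.area_eq]
    push_cast
    ring
  cover := h.cover_append

theorem not_crosses_sub_of_crosses_sub (h : IsBlockPair α A B) {y : ℝ} {i k : ℕ}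
    (hi : i ∈ Set.Icc 1 A.word.length) (hk : k ∈ Set.Icc 1 B.word.length)
    (hA : Crosses A.shift (y - i * α)) : ¬ Crosses B.shift (y - k * α) := by
  intro hB
  rcases lt_trichotomy i k with hik | rfl | hik
  · obtain ⟨m, rfl⟩ := Nat.exists_eq_add_of_lt hik
    have hB' : Crosses B.shift (y - i * α - (m + 1 : ℕ) * α) := by
      convert hB using 1
      push_cast
      ring
    obtain ⟨r, hr⟩ := exists_sub_intCast_mem_uIoo hA hB' h.shift_mul_neg
    exact h.right.gap (m + 1) m.succ_pos (by linarith [hk.2, hi.1]) r hr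
  · exact h.not_crosses_of_crosses hA hB
  · obtain ⟨m, rfl⟩ := Nat.exists_eq_add_of_lt hik
    have hA' : Crosses A.shift (y - k * α - (m + 1 : ℕ) * α) := by
      convert hA using 1
      push_cast
      ring
    obtain ⟨r, hr⟩ := exists_sub_intCast_mem_uIoo hB hA' h.symm.shift_mul_neg
    exact h.left.gap (m + 1) m.succ_pos (by linarith [hk.1, hi.2]) r hr

/-- Follow the window along the orbit until the first crossing, where it reads the block itself. -/
theorem trace_wordAt_eq (h : IsBlockPair α A B) (hA : -A.shift ∈ Set.Icc (α - 1) α) {y : ℝ}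
    (hy : ¬ Crosses A.shift (y - α)) (lam : ℝ) (E : ℂ) :
    (transferM lam E (wordAt α y A.word.length)).trace = (transferM lam E A.word).trace := by
  obtain ⟨r, hr⟩ := h.left.shift_eq
  have hex := exists_crosses_add_mul h.shift_ne_zero hr y
  have hfirst : ∀ i < Nat.find hex, ¬ Crosses A.shift (y + i * α) := fun i => Nat.find_min hex
  have hcross := Nat.find_spec hex
  set j := Nat.find hex
  rw [← trace_transferM_wordAt_orbit j, h.left.wordAt_eq _
    (hcross.mono (h.uIcc_zero_shift_subset Set.right_mem_uIcc)) (hcross.letter_eq h.mem_Icc hA)]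
  intro i hi
  rw [hr, add_comm (r : ℝ), ← add_assoc, letter_add_intCast]
  refine letter_add_eq_letter (hfirst i hi) ?_
  cases i with
  | zero => rwa [Nat.cast_zero, zero_mul, add_zero]
  | succ i =>
    rw [Nat.cast_succ, add_one_mul, ← add_assoc, add_sub_cancel_right]
    exact hfirst i (i.lt_succ_self.trans hi)

theorem letter_add_length_eq (h : IsBlockPair α A B) {y : ℝ}
    (hy : ∀ i ∈ Set.Icc 1 A.word.length, ¬ Crosses A.shift (y - i * α)) {i : ℕ} (hi : 1 ≤ i)
    (hiA : i < A.word.length) :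
    letter α (y - i * α + A.word.length * α) = letter α (y - i * α) := by
  obtain ⟨r, hr⟩ := h.left.shift_eq
  rw [hr, add_comm (r : ℝ), ← add_assoc, letter_add_intCast]
  refine letter_add_eq_letter (hy i ⟨hi, hiA.le⟩) ?_
  have := hy (i + 1) ⟨by omega, hiA⟩
  rwa [Nat.cast_succ, add_one_mul, ← sub_sub] at this

theorem exists_wordAt_eq_append (h : IsBlockPair α A B) {y : ℝ} (hy : Crosses (-B.shift) y) :
    ∃ Y ∈ ({A, B} : Set Block),
      wordAt α y (A.word.length + Y.word.length) = A.word ++ Y.word := by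
  rcases h.crosses_add_shift hy with hA | hB
  · refine ⟨A, Or.inl rfl, ?_⟩
    rw [wordAt_add, h.wordAt_eq_of_crosses hy, h.left.wordAt_add_length,
      h.wordAt_eq_of_crosses hA]
  · refine ⟨B, Or.inr rfl, ?_⟩
    rw [wordAt_add, h.wordAt_eq_of_crosses hy, h.left.wordAt_add_length,
      h.symm.wordAt_eq_of_crosses hB]

theorem exists_blocks_wordAt (h : IsBlockPair α A B) (y : ℝ) :
    ∃ i : ℕ, ∃ X ∈ ({A, B} : Set Block), ∃ Y ∈ ({A, B} : Set Block), i < X.word.length ∧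
      wordAt α (y - i * α) (X.word.length + Y.word.length) = X.word ++ Y.word := by
  obtain ⟨i, ⟨hB, hi⟩ | ⟨hA, hi⟩⟩ := h.cover y
  · obtain ⟨Y, hY, hread⟩ := h.exists_wordAt_eq_append hB
    exact ⟨i, A, Or.inl rfl, Y, hY, hi, hread⟩
  · obtain ⟨Y, hY, hread⟩ := h.symm.exists_wordAt_eq_append hA
    exact ⟨i, B, Or.inr rfl, Y, Or.symm hY, hi, hread⟩

end IsBlockPair
end Blocks

/-! ### The sequence of block pairs -/

/-- The two return words ordered by displacement, the smaller one first. -/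
def orderPair (A B : Block) : Block × Block := if |A.shift| < |B.shift| then (A, B) else (B, A)

/-- The additive Euclidean algorithm on return words: the word of larger displacement is continued
by the other one, and the new pair is put in order.  The first component always has the smaller
displacement. -/
def blockPair (α : ℝ) : ℕ → Block × Block
  | 0 => orderPair ⟨[0], α⟩ ⟨[1], α - 1⟩
  | n + 1 => orderPair (blockPair α n).1 ((blockPair α n).2 ++ (blockPair α n).1)

section BlockPair

variable {α : ℝ}

theorem isReturnBlock_zero (hα : α ∈ Set.Ioo 0 1) :
    IsReturnBlock α ⟨[0], α⟩ ⟨[1], α - 1⟩ where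
  length_pos := Nat.one_pos
  shift_mem := ⟨by linarith, le_rfl⟩
  shift_eq := ⟨0, by rw [List.length_singleton, Nat.cast_one, Int.cast_zero]; ring⟩
  wordAt_eq y _ hy := by rw [List.length_singleton, wordAt_one, hy, side, if_pos hα.1]
  gap m hm hlt := absurd hlt (by rw [List.length_singleton]; omega)

theorem isReturnBlock_one (hα : α ∈ Set.Ioo 0 1) :
    IsReturnBlock α ⟨[1], α - 1⟩ ⟨[0], α⟩ where
  length_pos := Nat.one_pos
  shift_mem := ⟨le_rfl, by linarith⟩
  shift_eq := ⟨1, by rw [List.length_singleton, Nat.cast_one, Int.cast_one]; ring⟩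
  wordAt_eq y _ hy := by
    rw [List.length_singleton, wordAt_one, hy, side, if_neg (by linarith [hα.2])]
  gap m hm hlt := absurd hlt (by rw [List.length_singleton]; omega)

theorem isBlockPair_zero_one (hα : α ∈ Set.Ioo 0 1) :
    IsBlockPair α ⟨[0], α⟩ ⟨[1], α - 1⟩ where
  left := isReturnBlock_zero hα
  right := isReturnBlock_one hα
  shift_mul_neg := mul_neg_of_pos_of_neg hα.1 (by linarith [hα.2])
  area_eq := by
    rw [List.length_singleton, List.length_singleton, abs_of_pos hα.1,
      abs_of_neg (by linarith [hα.2])]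
    ring
  cover y := by
    refine ⟨0, ?_⟩
    rw [List.length_singleton, List.length_singleton, Nat.cast_zero, zero_mul, sub_zero,
      and_iff_left one_pos, and_iff_left one_pos]
    by_contra! hnot
    rw [Crosses, Crosses, not_not, not_not, neg_sub, add_sub_left_comm, add_comm,
      Int.floor_add_one, ← sub_eq_add_neg] at hnot
    exact (lt_add_one _).ne' (hnot.1.trans hnot.2.symm)

theorem IsBlockPair.abs_shift_ne {A B : Block} (h : IsBlockPair α A B) (hirr : Irrational α) :
    |A.shift| ≠ |B.shift| := by
  intro heq
  obtain ⟨r, hr⟩ := h.left.shift_eq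
  obtain ⟨s, hs⟩ := h.right.shift_eq
  have hsum : A.shift + B.shift = 0 := by
    rcases abs_eq_abs.1 heq with heq | heq
    · nlinarith [h.shift_mul_neg, mul_self_nonneg B.shift]
    · rw [heq, neg_add_cancel]
  refine (hirr.natCast_mul (m := A.word.length + B.word.length) ?_).ne_int (r + s) ?_
  · exact (Nat.add_pos_left h.left.length_pos _).ne'
  · push_cast
    linear_combination hr + hs + hsum

theorem orderPair_induction {P : Block → Block → Prop} {A B : Block} (hAB : P A B) (hBA : P B A) :
    P (orderPair A B).1 (orderPair A B).2 := by
  rw [orderPair]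
  split_ifs <;> assumption

theorem abs_shift_orderPair_lt {A B : Block} (h : |A.shift| ≠ |B.shift|) :
    |(orderPair A B).1.shift| < |(orderPair A B).2.shift| := by
  rw [orderPair]
  split_ifs with hlt
  · exact hlt
  · exact lt_of_le_of_ne (not_lt.1 hlt) h.symm

theorem IsBlockPair.orderPair {A B : Block} (h : IsBlockPair α A B) (hirr : Irrational α) :
    IsBlockPair α (orderPair A B).1 (orderPair A B).2 ∧
      |(SturmianTransfer.orderPair A B).1.shift| < |(SturmianTransfer.orderPair A B).2.shift| :=
  ⟨orderPair_induction h h.symm, abs_shift_orderPair_lt (h.abs_shift_ne hirr)⟩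

theorem isBlockPair_blockPair (hα : α ∈ Set.Ioo 0 1) (hirr : Irrational α) (n : ℕ) :
    IsBlockPair α (blockPair α n).1 (blockPair α n).2 ∧
      |(blockPair α n).1.shift| < |(blockPair α n).2.shift| := by
  induction n with
  | zero => exact (isBlockPair_zero_one hα).orderPair hirr
  | succ n ih => exact (ih.1.append ih.2).orderPair hirr

theorem blockPair_induction {P : Block → Block → Prop} (hsymm : ∀ A B, P A B → P B A)
    (hzero : P ⟨[0], α⟩ ⟨[1], α - 1⟩) (happend : ∀ A B, P A B → P A (B ++ A)) (n : ℕ) :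
    P (blockPair α n).1 (blockPair α n).2 := by
  induction n with
  | zero => exact orderPair_induction hzero (hsymm _ _ hzero)
  | succ n ih => exact orderPair_induction (happend _ _ ih) (hsymm _ _ (happend _ _ ih))

theorem abs_le_one_of_mem_blockPair (n : ℕ) :
    (∀ a ∈ (blockPair α n).1.word, |a| ≤ 1) ∧ ∀ a ∈ (blockPair α n).2.word, |a| ≤ 1 := by
  refine blockPair_induction
    (P := fun A B => (∀ a ∈ A.word, |a| ≤ 1) ∧ ∀ a ∈ B.word, |a| ≤ 1)
    (fun _ _ => And.symm) ?_ ?_ n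
  · simp only [List.mem_singleton, forall_eq, abs_zero, abs_one, zero_le_one, le_refl, and_self]
  · rintro A B ⟨hA, hB⟩
    refine ⟨hA, fun a ha => ?_⟩
    exact (List.mem_append.1 ha).elim (hB a) (hA a)

theorem frickeVogt_blockPair (lam : ℝ) (E : ℂ) (n : ℕ) :
    frickeVogt (transferM lam E (blockPair α n).1.word) (transferM lam E (blockPair α n).2.word) =
      4 + (lam : ℂ) ^ 2 := by
  refine blockPair_induction
    (P := fun A B => frickeVogt (transferM lam E A.word) (transferM lam E B.word) =
      4 + (lam : ℂ) ^ 2) (fun A B h => by rw [frickeVogt_comm, h]) ?_ ?_ n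
  · simp only [frickeVogt, transferM, transferT, one_mul, Matrix.mul_fin_two,
      Matrix.trace_fin_two_of, Complex.ofReal_zero, Complex.ofReal_one]
    ring
  · intro A B h
    rw [Block.word_append, transferM_append, frickeVogt_mul_right (det_transferM _), h]

end BlockPair

/-! ### Spectral exclusion for discrete Schrödinger operators -/

theorem isUnit_of_isSelfAdjoint_of_norm_le {F : Type*} [NormedAddCommGroup F]
    [InnerProductSpace ℂ F] [CompleteSpace F] {T : F →L[ℂ] F} (hT : IsSelfAdjoint T) {c : ℝ≥0}
    (h : ∀ x, ‖x‖ ≤ c * ‖T x‖) : IsUnit T := by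
  have hanti := ContinuousLinearMap.antilipschitz_of_bound T h
  rw [ContinuousLinearMap.isUnit_iff_bijective,
    ContinuousLinearMap.bijective_iff_dense_range_and_antilipschitz]
  refine ⟨?_, c, hanti⟩
  rw [Submodule.topologicalClosure_eq_top_iff, ContinuousLinearMap.orthogonal_range,
    hT.adjoint_eq, LinearMap.ker_eq_bot]
  exact hanti.injective

section Weights

variable {η r C : ℝ} {Q : ℕ}

theorem exists_one_add_half_le_mul_pow (hη : 0 < η) (Q : ℕ) :
    ∃ r ∈ Set.Ioo (0 : ℝ) 1, 1 + η / 2 ≤ (1 + η) * r ^ Q := by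
  have hcont : Continuous fun r : ℝ => (1 + η) * r ^ Q := by fun_prop
  have hone : 1 + η / 2 < (1 + η) * 1 ^ Q := by rw [one_pow]; linarith
  obtain ⟨r, hr, hmem⟩ := Filter.nonempty_of_mem (Filter.inter_mem
    (nhdsWithin_le_nhds ((hcont.tendsto 1).eventually_const_le hone)) (Ioo_mem_nhdsLT one_pos))
  exact ⟨r, hmem, hr⟩

/-- Maximum principle for the exponentially weighted supremum of `a` around `m`. -/
theorem le_of_forall_local_le (hη : 0 < η) (hr : r ∈ Set.Ioo (0 : ℝ) 1)
    (hrQ : 1 + η / 2 ≤ (1 + η) * r ^ Q) {a g : ℤ → ℝ} (ha : ∀ n, 0 ≤ a n) (hg : ∀ n, 0 ≤ g n)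
    (hbdd : BddAbove (Set.range a))
    (hlocal : ∀ (p : ℤ) (φ ψ : ℝ), (∀ j, |j - p| ≤ Q → g j ≤ φ) → (∀ j, |j - p| ≤ Q → a j ≤ ψ) →
      (1 + η) * a p ≤ ψ + C * φ)
    {m : ℤ} {F : ℝ} (hF : ∀ n, r ^ (n - m).natAbs * g n ≤ F) : a m ≤ 2 * C / η * F := by
  obtain ⟨hr0, hr1⟩ := hr
  let b : ℤ → ℝ := fun n => r ^ (n - m).natAbs * a n
  have hb : BddAbove (Set.range b) := by
    obtain ⟨B, hB⟩ := hbdd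
    refine ⟨B, ?_⟩
    rintro _ ⟨n, rfl⟩
    exact (mul_le_of_le_one_left (ha n) (pow_le_one₀ hr0.le hr1.le)).trans (hB ⟨n, rfl⟩)
  set S := ⨆ n, b n
  have hbS (n : ℤ) : b n ≤ S := le_ciSup hb n
  have hsup (n : ℤ) : (1 + η / 2) * b n ≤ S + C * F := by
    set ρ := r ^ ((n - m).natAbs + Q) with hρ
    have hρ0 : 0 < ρ := pow_pos hr0 _
    have hρle {j : ℤ} (hj : |j - n| ≤ Q) : ρ ≤ r ^ (j - m).natAbs := by
      rw [abs_le] at hj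
      exact pow_le_pow_of_le_one hr0.le hr1.le (by omega)
    have hn : (1 + η) * a n ≤ S / ρ + C * (F / ρ) := by
      refine hlocal n _ _ (fun j hj => ?_) fun j hj => ?_ <;> rw [le_div_iff₀' hρ0]
      · exact (mul_le_mul_of_nonneg_right (hρle hj) (hg j)).trans (hF j)
      · exact (mul_le_mul_of_nonneg_right (hρle hj) (ha j)).trans (hbS j)
    calc (1 + η / 2) * b n ≤ (1 + η) * r ^ Q * b n :=
          mul_le_mul_of_nonneg_right hrQ (mul_nonneg (pow_nonneg hr0.le _) (ha n))
      _ = ρ * ((1 + η) * a n) := by rw [hρ, pow_add]; ring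
      _ ≤ ρ * (S / ρ + C * (F / ρ)) := by gcongr
      _ = S + C * F := by field_simp
  have hS : S ≤ (S + C * F) / (1 + η / 2) :=
    ciSup_le fun n => (le_div_iff₀' (by positivity)).2 (hsup n)
  rw [le_div_iff₀' (by positivity)] at hS
  calc a m = b m := by simp only [b, sub_self, Int.natAbs_zero, pow_zero, one_mul]
    _ ≤ S := hbS m
    _ ≤ 2 * C / η * F := by rw [div_mul_eq_mul_div, le_div_iff₀ hη]; linarith

end Weights

theorem tsum_le_tsum_mul_tsum_of_le_convolution {G : Type*} [AddCommGroup G] {a g w : G → ℝ≥0∞}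
    (h : ∀ m, a m ≤ ∑' n, w (n - m) * g n) : ∑' m, a m ≤ (∑' k, w k) * ∑' n, g n := by
  calc ∑' m, a m ≤ ∑' m, ∑' n, w (n - m) * g n := ENNReal.tsum_le_tsum h
    _ = ∑' n, (∑' m, w (n - m)) * g n := by
      rw [ENNReal.tsum_comm]
      exact tsum_congr fun n => ENNReal.tsum_mul_right
    _ = ∑' n, (∑' k, w k) * g n := by
      exact tsum_congr fun n => congrArg (· * g n) ((Equiv.subLeft n).tsum_eq w)
    _ = (∑' k, w k) * ∑' n, g n := ENNReal.tsum_mul_left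

theorem hasSum_norm_sq (u : lp (fun _ : ℤ => ℂ) 2) : HasSum (fun n => ‖u n‖ ^ 2) (‖u‖ ^ 2) := by
  simpa only [ENNReal.toReal_ofNat, Real.rpow_ofNat] using
    lp.hasSum_norm (p := 2) (by norm_num) u

theorem summable_conj_mul_sub_one (x y : lp (fun _ : ℤ => ℂ) 2) :
    Summable fun n : ℤ => starRingEnd ℂ (x n) * y (n - 1) := by
  have hy := (Equiv.subRight (1 : ℤ)).summable_iff.2 (hasSum_norm_sq y).summable
  refine Summable.of_norm_bounded ((hasSum_norm_sq x).summable.add hy) fun n => ?_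
  rw [norm_mul, RCLike.norm_conj, Function.comp_apply, Equiv.subRight_apply]
  nlinarith [two_mul_le_add_sq ‖x n‖ ‖y (n - 1)‖, norm_nonneg (x n), norm_nonneg (y (n - 1))]

/-- `H` is the discrete Schrödinger operator on `ℓ²(ℤ)` with potential `lam * v`. -/
def IsSchrodinger (lam : ℝ) (v : ℤ → ℝ)
    (H : lp (fun _ : ℤ => ℂ) 2 →L[ℂ] lp (fun _ : ℤ => ℂ) 2) : Prop :=
  ∀ (u : lp (fun _ : ℤ => ℂ) 2) (n : ℤ), H u n = u (n + 1) + u (n - 1) + (lam * v n : ℝ) * u n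

/-- The word of length `q` read from position `p` of the two-sided sequence `v`. -/
def window (v : ℤ → ℝ) (p : ℤ) (q : ℕ) : List ℝ := (List.range q).map fun i : ℕ => v (p + i)

section Schrodinger

variable {lam : ℝ} {v : ℤ → ℝ} {H : lp (fun _ : ℤ => ℂ) 2 →L[ℂ] lp (fun _ : ℤ => ℂ) 2}

/-- The two inner products differ by the telescoping sum of the Wronskian of `x` and `y`. -/
theorem IsSchrodinger.isSelfAdjoint (hH : IsSchrodinger lam v H) : IsSelfAdjoint H := by
  rw [ContinuousLinearMap.isSelfAdjoint_iff_isSymmetric]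
  intro x y
  let W : ℤ → ℂ := fun n => starRingEnd ℂ (x n) * y (n - 1) - starRingEnd ℂ (x (n - 1)) * y n
  have hW : Summable W := by
    refine (summable_conj_mul_sub_one x y).sub ((summable_conj_mul_sub_one y x).star.congr ?_)
    intro n
    rw [← starRingEnd_apply, map_mul, RCLike.conj_conj, mul_comm]
  have htele : HasSum (fun n => W (n + 1) - W n) 0 := by
    have hshift := (Equiv.addRight (1 : ℤ)).hasSum_iff.2 hW.hasSum
    rw [← sub_self (∑' n, W n)]
    exact hshift.sub hW.hasSum
  have hterm (n : ℤ) : inner ℂ (H x n) (y n) - inner ℂ (x n) (H y n) = W (n + 1) - W n := by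
    simp only [RCLike.inner_apply, hH x, hH y, map_add, map_mul, Complex.conj_ofReal, W,
      add_sub_cancel_right]
    ring
  refine sub_eq_zero.1 (HasSum.unique ?_ htele)
  rw [← funext hterm]
  exact HasSum.sub (lp.hasSum_inner _ _) (lp.hasSum_inner _ _)

theorem window_succ (v : ℤ → ℝ) (p : ℤ) (q : ℕ) :
    window v p (q + 1) = window v p q ++ [v (p + q)] := by
  rw [window, List.range_succ, List.map_append, List.map_singleton, window]

theorem window_succ' (v : ℤ → ℝ) (p : ℤ) (q : ℕ) :
    window v p (q + 1) = v p :: window v (p + 1) q := by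
  rw [window, List.range_succ_eq_map, List.map_cons, List.map_map, Nat.cast_zero, add_zero, window]
  congr 1
  refine List.map_congr_left fun i _ => ?_
  rw [Function.comp_apply, Nat.cast_succ, add_right_comm, add_assoc]

theorem length_window (v : ℤ → ℝ) (p : ℤ) (q : ℕ) : (window v p q).length = q := by
  rw [window, List.length_map, List.length_range]

theorem norm_transferM_window_le (hv : ∀ n, |v n| ≤ 1) (E : ℂ) (p : ℤ) (q : ℕ) :
    ‖transferM lam E (window v p q)‖ ≤ (‖E‖ + |lam| + 1) ^ q := by
  have := norm_transferM_le (lam := lam) (E := E) (w := window v p q) fun a ha => by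
    obtain ⟨i, -, rfl⟩ := List.mem_map.1 ha
    exact hv _
  rwa [length_window] at this

end Schrodinger

section Recurrence

/-- The vector `(u n, u (n - 1))` on which the one-step transfer matrices act. -/
def state (u : ℤ → ℂ) (n : ℤ) : EuclideanSpace ℂ (Fin 2) := !₂[u n, u (n - 1)]

variable {lam : ℝ} {v : ℤ → ℝ} {E : ℂ} {u f : ℤ → ℂ}

theorem state_add_one (hu : ∀ n, u (n + 1) = (E - lam * v n) * u n - u (n - 1) + f n) (n : ℤ) :
    state u (n + 1) =
      Matrix.toEuclideanCLM (𝕜 := ℂ) (transferT lam E (v n)) (state u n) + !₂[f n, 0] := by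
  ext i
  rw [PiLp.add_apply, Matrix.ofLp_toEuclideanCLM]
  fin_cases i <;> simp [state, transferT, hu n, ← sub_eq_add_neg, mul_comm]

theorem norm_state_sub_transferM_window_le
    (hu : ∀ n, u (n + 1) = (E - lam * v n) * u n - u (n - 1) + f n) (hv : ∀ n, |v n| ≤ 1)
    {φ : ℝ} {p : ℤ} {m : ℕ} (hf : ∀ i < m, ‖f (p + i)‖ ≤ φ) (hφ : 0 ≤ φ) :
    ‖state u (p + m) -
      Matrix.toEuclideanCLM (𝕜 := ℂ) (transferM lam E (window v p m)) (state u p)‖ ≤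
      (‖E‖ + |lam| + 2) ^ m * φ := by
  set K := ‖E‖ + |lam| + 2
  have hK1 : 1 ≤ K := by linarith [norm_nonneg E, abs_nonneg lam]
  induction m with
  | zero => simpa [window, transferM] using hφ
  | succ m ih =>
    set T := transferT lam E (v (p + m))
    set e := state u (p + m) -
      Matrix.toEuclideanCLM (𝕜 := ℂ) (transferM lam E (window v p m)) (state u p)
    have hT : ‖T‖ ≤ K - 1 := by linarith [norm_transferT_le (lam := lam) (E := E) (hv (p + m))]
    have hstep : state u (p + (m + 1 : ℕ)) -
        Matrix.toEuclideanCLM (𝕜 := ℂ) (transferM lam E (window v p (m + 1))) (state u p) =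
        Matrix.toEuclideanCLM (𝕜 := ℂ) T e + !₂[f (p + m), 0] := by
      rw [Nat.cast_succ, ← add_assoc, state_add_one hu, window_succ, transferM_append, map_mul,
        map_sub, mul_apply_eq_comp, transferM, transferM, one_mul]
      abel
    have hTe : ‖Matrix.toEuclideanCLM (𝕜 := ℂ) T e‖ ≤ (K - 1) * (K ^ m * φ) :=
      (ContinuousLinearMap.le_opNorm _ e).trans
        (mul_le_mul hT (ih fun i hi => hf i (hi.trans m.lt_succ_self)) (norm_nonneg _)
          (by linarith))
    have hfm : ‖(!₂[f (p + m), 0] : EuclideanSpace ℂ (Fin 2))‖ ≤ K ^ m * φ := by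
      have hnorm : ‖(!₂[f (p + m), 0] : EuclideanSpace ℂ (Fin 2))‖ = ‖f (p + m)‖ := by
        simp [EuclideanSpace.norm_eq]
      rw [hnorm]
      exact (hf m m.lt_succ_self).trans (le_mul_of_one_le_left hφ (one_le_pow₀ hK1))
    rw [hstep]
    calc _ ≤ (K - 1) * (K ^ m * φ) + K ^ m * φ := norm_add_le_of_le hTe hfm
      _ = K ^ (m + 1) * φ := by ring

/-- `e` and `e'` are the errors of the recurrence over the `q` sites after and before `p`. -/
theorem trace_mul_transferT_mul_sub_add_eq
    (hu : ∀ n, u (n + 1) = (E - lam * v n) * u n - u (n - 1) + f n)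
    {P : Matrix (Fin 2) (Fin 2) ℂ} (hP : P.det = 1) {p q : ℤ} {e e' : EuclideanSpace ℂ (Fin 2)}
    (he : state u (p + 1 + q) - Matrix.toEuclideanCLM (𝕜 := ℂ) P (state u (p + 1)) = e)
    (he' : state u (p - q + q) - Matrix.toEuclideanCLM (𝕜 := ℂ) P (state u (p - q)) = e') :
    (P * transferT lam E (v p)).trace * u p - (u (p + 1 + q) + u (p - q - 1)) =
      P 0 0 * e' 1 - P 1 0 * e' 0 - P 0 0 * f p - e 0 := by
  subst he he'
  rw [Matrix.det_fin_two] at hP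
  simp only [state, transferT, PiLp.sub_apply, Matrix.ofLp_toEuclideanCLM, Matrix.trace_fin_two,
    Matrix.mul_apply, Fin.sum_univ_two, Matrix.mulVec, dotProduct, Matrix.of_apply,
    Matrix.cons_val_zero, Matrix.cons_val_one, Fin.isValue, sub_add_cancel, add_sub_cancel_right,
    Matrix.cons_val', Matrix.cons_val_fin_one, hu p]
  linear_combination u (p - q - 1) * hP

theorem norm_trace_mul_transferT_mul_sub_add_le
    (hu : ∀ n, u (n + 1) = (E - lam * v n) * u n - u (n - 1) + f n)
    {P : Matrix (Fin 2) (Fin 2) ℂ} (hP : P.det = 1) {p q : ℤ} {c φ : ℝ} (hc : 1 ≤ c)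
    (hPc : ‖P‖ ≤ c) (hf : ‖f p‖ ≤ φ)
    (he : ‖state u (p + 1 + q) - Matrix.toEuclideanCLM (𝕜 := ℂ) P (state u (p + 1))‖ ≤ c * φ)
    (he' : ‖state u (p - q + q) - Matrix.toEuclideanCLM (𝕜 := ℂ) P (state u (p - q))‖ ≤ c * φ) :
    ‖(P * transferT lam E (v p)).trace * u p - (u (p + 1 + q) + u (p - q - 1))‖ ≤
      4 * c ^ 2 * φ := by
  rw [trace_mul_transferT_mul_sub_add_eq hu hP rfl rfl]
  have hφ : 0 ≤ φ := (norm_nonneg _).trans hf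
  have hcφ : φ ≤ c * φ := le_mul_of_one_le_left hφ hc
  have hentry (i j) : ‖P i j‖ ≤ c := (norm_apply_le_l2_opNorm P i j).trans hPc
  have hprod {i j : Fin 2} {z : ℂ} (hz : ‖z‖ ≤ c * φ) : ‖P i j * z‖ ≤ c ^ 2 * φ :=
    (norm_mul_le_of_le (hentry i j) hz).trans_eq (by ring)
  have hccφ : c * φ ≤ c ^ 2 * φ := by
    gcongr
    exact le_self_pow₀ hc two_ne_zero
  calc _ ≤ c ^ 2 * φ + c ^ 2 * φ + c ^ 2 * φ + c ^ 2 * φ :=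
        norm_sub_le_of_le (norm_sub_le_of_le (norm_sub_le_of_le
          (hprod ((PiLp.norm_apply_le _ 1).trans he')) (hprod ((PiLp.norm_apply_le _ 0).trans he')))
          (hprod (hf.trans hcφ))) (((PiLp.norm_apply_le _ 0).trans he).trans hccφ)
    _ = 4 * c ^ 2 * φ := by ring

/-- Over a window whose letters repeat the preceding `q - 1` letters, the Cayley-Hamilton
identity turns the transfer matrix into a three-term relation with its trace. -/
theorem norm_trace_mul_sub_add_le
    (hu : ∀ n, u (n + 1) = (E - lam * v n) * u n - u (n - 1) + f n) (hv : ∀ n, |v n| ≤ 1)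
    {φ : ℝ} {p : ℤ} {q : ℕ} (hq : 1 ≤ q) (hrep : ∀ i : ℕ, 1 ≤ i → i < q → v (p - i + q) = v (p - i))
    (hf : ∀ j, |j - p| ≤ q → ‖f j‖ ≤ φ) :
    ‖(transferM lam E (window v p q)).trace * u p - (u (p + q) + u (p - q))‖ ≤
      4 * ((‖E‖ + |lam| + 2) ^ q) ^ 2 * φ := by
  obtain ⟨q, rfl⟩ := Nat.exists_eq_add_of_le' hq
  have hfp : ‖f p‖ ≤ φ := hf p (by rw [sub_self, abs_zero]; positivity)
  have hφ : 0 ≤ φ := (norm_nonneg _).trans hfp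
  have hwin : window v (p - q) q = window v (p + 1) q := by
    refine List.map_congr_left fun i hi => ?_
    have hiq := List.mem_range.1 hi
    have := hrep (q - i) (by omega) (by omega)
    rw [Nat.cast_sub hiq.le] at this
    convert this.symm using 2 <;> push_cast <;> ring
  have hfwd := norm_state_sub_transferM_window_le hu hv (p := p + 1) (m := q)
    (fun i hi => hf _ (by rw [abs_le]; push_cast; omega)) hφ
  have hbwd := norm_state_sub_transferM_window_le hu hv (p := p - q) (m := q)
    (fun i hi => hf _ (by rw [abs_le]; push_cast; omega)) hφ
  rw [hwin] at hbwd
  have hK1 : 1 ≤ ‖E‖ + |lam| + 2 := by linarith [norm_nonneg E, abs_nonneg lam]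
  have hP : ‖transferM lam E (window v (p + 1) q)‖ ≤ (‖E‖ + |lam| + 2) ^ q :=
    (norm_transferM_window_le hv E _ _).trans
      (pow_le_pow_left₀ (by positivity) (by linarith) q)
  have key := norm_trace_mul_transferT_mul_sub_add_le hu (det_transferM _) (one_le_pow₀ hK1) hP
    hfp hfwd hbwd
  rw [window_succ', transferM, Nat.cast_succ, ← add_assoc, add_right_comm, ← sub_sub p]
  refine key.trans ?_
  gcongr
  exact q.le_succ

end Recurrence

theorem norm_sq_le_of_sq_le_convolution {w : ℤ → ℝ} (hw0 : ∀ k, 0 ≤ w k) (hw : Summable w)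
    {u g : lp (fun _ : ℤ => ℂ) 2} (h : ∀ m, ‖u m‖ ^ 2 ≤ ∑' n, w (n - m) * ‖g n‖ ^ 2) :
    ‖u‖ ^ 2 ≤ (∑' k, w k) * ‖g‖ ^ 2 := by
  have hterm0 (m n : ℤ) : 0 ≤ w (n - m) * ‖g n‖ ^ 2 := mul_nonneg (hw0 _) (sq_nonneg _)
  have hsum (m : ℤ) : Summable fun n => w (n - m) * ‖g n‖ ^ 2 :=
    ((hasSum_norm_sq g).summable.mul_left (∑' k, w k)).of_nonneg_of_le (hterm0 m) fun n =>
      mul_le_mul_of_nonneg_right (hw.le_tsum _ fun k _ => hw0 k) (sq_nonneg _)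
  have hconv (m : ℤ) : ENNReal.ofReal (‖u m‖ ^ 2) ≤
      ∑' n, ENNReal.ofReal (w (n - m)) * ENNReal.ofReal (‖g n‖ ^ 2) := by
    simp_rw [← ENNReal.ofReal_mul (hw0 _)]
    rw [← ENNReal.ofReal_tsum_of_nonneg (hterm0 m) (hsum m)]
    exact ENNReal.ofReal_le_ofReal (h m)
  have key := tsum_le_tsum_mul_tsum_of_le_convolution (w := fun k => ENNReal.ofReal (w k)) hconv
  rw [← ENNReal.ofReal_tsum_of_nonneg (fun _ => sq_nonneg _) (hasSum_norm_sq u).summable,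
    ← ENNReal.ofReal_tsum_of_nonneg (fun _ => sq_nonneg _) (hasSum_norm_sq g).summable,
    ← ENNReal.ofReal_tsum_of_nonneg hw0 hw, (hasSum_norm_sq u).tsum_eq,
    (hasSum_norm_sq g).tsum_eq, ← ENNReal.ofReal_mul (tsum_nonneg hw0)] at key
  exact (ENNReal.ofReal_le_ofReal_iff (mul_nonneg (tsum_nonneg hw0) (sq_nonneg _))).1 key

theorem summable_pow_natAbs_sq {r : ℝ} (hr : r ∈ Set.Ioo (0 : ℝ) 1) :
    Summable fun k : ℤ => (r ^ k.natAbs) ^ 2 := by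
  have hgeom : Summable fun n : ℕ => (r ^ n) ^ 2 := by
    simp_rw [← pow_mul', pow_mul]
    exact summable_geometric_of_lt_one (sq_nonneg r) (pow_lt_one₀ hr.1.le hr.2 two_ne_zero)
  exact Summable.of_nat_of_neg (by simpa using hgeom) (by simpa using hgeom)

theorem exists_norm_le_of_local_le {η : ℝ} (hη : 0 < η) (C : ℝ) (Q : ℕ) :
    ∃ c : ℝ≥0, ∀ u g : lp (fun _ : ℤ => ℂ) 2,
      (∀ (p : ℤ) (φ ψ : ℝ), (∀ j, |j - p| ≤ Q → ‖g j‖ ≤ φ) → (∀ j, |j - p| ≤ Q → ‖u j‖ ≤ ψ) →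
        (1 + η) * ‖u p‖ ≤ ψ + C * φ) → ‖u‖ ≤ c * ‖g‖ := by
  obtain ⟨r, hr, hrQ⟩ := exists_one_add_half_le_mul_pow hη Q
  set D := 2 * C / η
  let w : ℤ → ℝ := fun k => D ^ 2 * (r ^ k.natAbs) ^ 2
  have hw0 (k : ℤ) : 0 ≤ w k := mul_nonneg (sq_nonneg D) (sq_nonneg _)
  have hw : Summable w := (summable_pow_natAbs_sq hr).mul_left _
  refine ⟨(√(∑' k, w k)).toNNReal, fun u g hlocal => ?_⟩
  have hsq (m : ℤ) : ‖u m‖ ^ 2 ≤ ∑' n, w (n - m) * ‖g n‖ ^ 2 := by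
    let t : ℤ → ℝ := fun n => (r ^ (n - m).natAbs * ‖g n‖) ^ 2
    have ht : Summable t := (hasSum_norm_sq g).summable.of_nonneg_of_le (fun n => sq_nonneg _)
      fun n => pow_le_pow_left₀ (mul_nonneg (pow_nonneg hr.1.le _) (norm_nonneg _))
        (mul_le_of_le_one_left (norm_nonneg _) (pow_le_one₀ hr.1.le hr.2.le)) 2
    have hm := le_of_forall_local_le hη hr hrQ (fun n => norm_nonneg (u n))
      (fun n => norm_nonneg (g n))
      ⟨‖u‖, Set.forall_mem_range.2 (lp.norm_apply_le_norm two_ne_zero u)⟩ hlocal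
      (F := √(∑' n, t n)) fun n => Real.le_sqrt_of_sq_le (ht.le_tsum n fun k _ => sq_nonneg _)
    calc ‖u m‖ ^ 2 ≤ (D * √(∑' n, t n)) ^ 2 := pow_le_pow_left₀ (norm_nonneg _) hm 2
      _ = ∑' n, w (n - m) * ‖g n‖ ^ 2 := by
        rw [mul_pow, Real.sq_sqrt (tsum_nonneg fun n => sq_nonneg _), ← tsum_mul_left]
        exact tsum_congr fun n => by ring
  rw [Real.coe_toNNReal _ (Real.sqrt_nonneg _)]
  refine le_of_sq_le_sq ?_ (mul_nonneg (Real.sqrt_nonneg _) (norm_nonneg g))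
  rw [mul_pow, Real.sq_sqrt (tsum_nonneg hw0)]
  exact norm_sq_le_of_sq_le_convolution hw0 hw hsq

section Spectrum

variable {lam : ℝ} {v : ℤ → ℝ} {H : lp (fun _ : ℤ => ℂ) 2 →L[ℂ] lp (fun _ : ℤ => ℂ) 2} {E : ℂ}

theorem IsSchrodinger.recurrence (hH : IsSchrodinger lam v H) (E : ℂ)
    (u : lp (fun _ : ℤ => ℂ) 2) (n : ℤ) :
    u (n + 1) = (E - lam * v n) * u n - u (n - 1) +
      ((H - algebraMap ℂ (lp (fun _ : ℤ => ℂ) 2 →L[ℂ] lp (fun _ : ℤ => ℂ) 2) E) u) n := by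
  have : ((H - algebraMap ℂ (lp (fun _ : ℤ => ℂ) 2 →L[ℂ] lp (fun _ : ℤ => ℂ) 2) E) u) n =
      H u n - E * u n := rfl
  rw [this, hH u n]
  push_cast
  ring

/-- By the three-term relation `|u p|` is at most a fixed fraction of the nearby values of `|u|`, up
to values of `(H - E) u`; so `H - E` is bounded below. -/
theorem IsSchrodinger.notMem_spectrum (hH : IsSchrodinger lam v H) (hv : ∀ n, |v n| ≤ 1)
    {η : ℝ} (hη : 0 < η) {Q : ℕ}
    (hloc : ∀ p : ℤ, ∃ q ∈ Finset.Icc 1 Q, (∀ i : ℕ, 1 ≤ i → i < q → v (p - i + q) = v (p - i)) ∧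
      2 + η ≤ ‖(transferM lam E (window v p q)).trace‖) : E ∉ spectrum ℂ H := by
  intro hE
  have hreal := hH.isSelfAdjoint.mem_spectrum_eq_re hE
  refine spectrum.mem_iff.1 hE ?_
  rw [← neg_sub, IsUnit.neg_iff]
  have hsa : IsSelfAdjoint
      (H - algebraMap ℂ (lp (fun _ : ℤ => ℂ) 2 →L[ℂ] lp (fun _ : ℤ => ℂ) 2) E) := by
    refine hH.isSelfAdjoint.sub (IsSelfAdjoint.algebraMap _ ?_)
    rw [hreal]
    exact Complex.conj_ofReal _
  set K := ‖E‖ + |lam| + 2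
  have hK1 : 1 ≤ K := by linarith [norm_nonneg E, abs_nonneg lam]
  obtain ⟨c, hc⟩ := exists_norm_le_of_local_le (half_pos hη) (2 * (K ^ Q) ^ 2) Q
  refine isUnit_of_isSelfAdjoint_of_norm_le hsa fun u => hc u _ fun p φ ψ hφ hψ => ?_
  obtain ⟨q, hq, hrep, htr⟩ := hloc p
  obtain ⟨hq1, hqQ⟩ := Finset.mem_Icc.1 hq
  have hqQ' : (q : ℤ) ≤ Q := Int.ofNat_le.2 hqQ
  have hthree := norm_trace_mul_sub_add_le (hH.recurrence E u) hv hq1 hrep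
    fun j hj => hφ j (hj.trans hqQ')
  have hφ0 : 0 ≤ φ := (norm_nonneg _).trans (hφ p (by
    rw [sub_self, abs_zero]
    exact Nat.cast_nonneg Q))
  have hcoef : 4 * (K ^ q) ^ 2 * φ ≤ 4 * (K ^ Q) ^ 2 * φ := by gcongr
  have hnext : ‖u (p + q)‖ ≤ ψ := hψ _ (by rwa [add_sub_cancel_left, Nat.abs_cast])
  have hprev : ‖u (p - q)‖ ≤ ψ := hψ _ (by rwa [sub_sub_cancel_left, abs_neg, Nat.abs_cast])
  have hup : (2 + η) * ‖u p‖ ≤ 2 * ψ + 4 * (K ^ Q) ^ 2 * φ := by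
    calc (2 + η) * ‖u p‖ ≤ ‖(transferM lam E (window v p q)).trace * u p‖ := by
          rw [norm_mul]; gcongr
      _ ≤ ‖u (p + q) + u (p - q)‖ + 4 * (K ^ q) ^ 2 * φ :=
          (norm_le_norm_add_norm_sub' _ _).trans (by gcongr)
      _ ≤ 2 * ψ + 4 * (K ^ Q) ^ 2 * φ := by linarith [norm_add_le_of_le hnext hprev]
  linarith

theorem IsSchrodinger.norm_le_of_mem_spectrum (hH : IsSchrodinger lam v H) (hv : ∀ n, |v n| ≤ 1)
    (hE : E ∈ spectrum ℂ H) : ‖E‖ ≤ 2 + |lam| := by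
  by_contra! hlt
  refine hH.notMem_spectrum hv (sub_pos.2 hlt) (Q := 1) (fun p => ⟨1, by simp, by omega, ?_⟩) hE
  have htr : (transferM lam E (window v p 1)).trace = E - (lam * v p : ℝ) := by
    simp [window, transferM, transferT, Matrix.trace_fin_two]
  have hle : ‖((lam * v p : ℝ) : ℂ)‖ ≤ |lam| := by
    rw [Complex.norm_real, Real.norm_eq_abs, abs_mul]
    exact mul_le_of_le_one_right (abs_nonneg _) (hv p)
  rw [htr]
  linarith [norm_sub_norm_le E ((lam * v p : ℝ) : ℂ)]

theorem window_sturmian {α : ℝ} (hα : α ∈ Set.Icc 0 1) (θ : ℝ) (p : ℤ) (q : ℕ) :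
    window (sturmian α θ) p q = wordAt α (p * α + θ + α) q := by
  refine List.map_congr_left fun i _ => ?_
  rw [sturmian_eq_letter hα]
  congr 1
  push_cast
  ring

theorem IsBlockPair.repetition {α : ℝ} {A B : Block} (h : IsBlockPair α A B)
    (hα : α ∈ Set.Icc 0 1) (hA : -A.shift ∈ Set.Icc (α - 1) α) {θ : ℝ} {p : ℤ}
    (hp : ∀ i ∈ Set.Icc 1 A.word.length, ¬ Crosses A.shift (p * α + θ + α - i * α)) :
    (∀ i : ℕ, 1 ≤ i → i < A.word.length →
      sturmian α θ (p - i + A.word.length) = sturmian α θ (p - i)) ∧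
    ∀ lam E, (transferM lam E (window (sturmian α θ) p A.word.length)).trace =
      (transferM lam E A.word).trace := by
  refine ⟨fun i hi hiA => ?_, fun lam E => ?_⟩
  · rw [sturmian_eq_letter hα, sturmian_eq_letter hα]
    convert h.letter_add_length_eq hp hi hiA using 2 <;> push_cast <;> ring
  · rw [window_sturmian hα]
    refine h.trace_wordAt_eq hA ?_ lam E
    simpa using hp 1 ⟨le_rfl, h.left.length_pos⟩

theorem IsBlockPair.norm_trace_le_two_or {α θ : ℝ} {A B : Block} (h : IsBlockPair α A B)
    (hα : α ∈ Set.Icc 0 1) (hA : -A.shift ∈ Set.Icc (α - 1) α)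
    (hB : -B.shift ∈ Set.Icc (α - 1) α) (hH : IsSchrodinger lam (sturmian α θ) H)
    (hE : E ∈ spectrum ℂ H) :
    ‖(transferM lam E A.word).trace‖ ≤ 2 ∨ ‖(transferM lam E B.word).trace‖ ≤ 2 := by
  by_contra! hgt
  obtain ⟨η, hη, hηlt⟩ := exists_between (lt_min (sub_pos.2 hgt.1) (sub_pos.2 hgt.2))
  obtain ⟨hηA, hηB⟩ := lt_min_iff.1 hηlt
  refine hH.notMem_spectrum (abs_sturmian_le_one θ) hη
    (Q := max A.word.length B.word.length) (fun p => ?_) hE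
  by_cases hp : ∀ i ∈ Set.Icc 1 A.word.length, ¬ Crosses A.shift (p * α + θ + α - i * α)
  · obtain ⟨hrep, htr⟩ := h.repetition hα hA hp
    exact ⟨A.word.length, Finset.mem_Icc.2 ⟨h.left.length_pos, le_max_left _ _⟩, hrep, by
      rw [htr]; linarith⟩
  · push Not at hp
    obtain ⟨i, hi, hcross⟩ := hp
    obtain ⟨hrep, htr⟩ := h.symm.repetition hα hB
      fun k hk => h.not_crosses_sub_of_crosses_sub hi hk hcross
    exact ⟨B.word.length, Finset.mem_Icc.2 ⟨h.right.length_pos, le_max_right _ _⟩, hrep, by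
      rw [htr]; linarith⟩

end Spectrum

/-! ### Growth along the sequence of block pairs -/

theorem AltBound.of_norm_le {R : Type*} [NormedRing R] {A B X : R} {c : ℝ} (hc : 1 ≤ c)
    (hA : ‖A‖ ≤ c) (hB : ‖B‖ ≤ c) (hX : ‖X‖ ≤ c) : AltBound A B X (c ^ 4) := by
  have hmono {m : ℕ} (hm : m ≤ 4) {Y : R} (hY : ‖Y‖ ≤ c ^ m) : ‖Y‖ ≤ c ^ 4 :=
    hY.trans (pow_le_pow_right₀ hc hm)
  have hstep {Y Z : R} {m : ℕ} (hZ : ‖Z‖ ≤ c) (hY : ‖Y‖ ≤ c ^ m) : ‖Z * Y‖ ≤ c ^ (m + 1) :=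
    (norm_mul_le_of_le hZ hY).trans_eq (pow_succ' c m).symm
  have hX1 : ‖X‖ ≤ c ^ 1 := hX.trans_eq (pow_one c).symm
  have hAX := hstep hA hX1
  have hBX := hstep hB hX1
  have hBAX := hstep hB hAX
  exact ⟨hmono (by norm_num) hX1, hmono (by norm_num) hAX, hmono (by norm_num) hBX,
    hmono (by norm_num) (hstep hA hBX), hmono (by norm_num) hBAX, hstep hA hBAX⟩

/-- The growth bound carried along the block pairs: `AltBound` for every suffix of either word. -/
def SuffixBound (lam : ℝ) (E : ℂ) (A B : Block) (b : ℝ) : Prop :=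
  ∀ x, x <:+ A.word ∨ x <:+ B.word →
    AltBound (transferM lam E A.word) (transferM lam E B.word) (transferM lam E x) b

section Growth

variable {α lam b c K : ℝ} {E : ℂ} {A B : Block}

theorem SuffixBound.one_le (h : SuffixBound lam E A B b) : 1 ≤ b := by
  simpa only [transferM, CStarRing.norm_one] using (h [] (Or.inl List.nil_suffix)).one

theorem SuffixBound.mono (h : SuffixBound lam E A B b) (hbc : b ≤ c) : SuffixBound lam E A B c :=
  fun x hx => (h x hx).mono hbc

theorem SuffixBound.append (h : SuffixBound lam E A B b)
    (ht : ‖(transferM lam E A.word).trace‖ ≤ K) :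
    SuffixBound lam E A (B ++ A) ((K + 1) ^ 2 * b) := by
  have hsq := mul_self_eq_trace_smul_sub_one (det_transferM (lam := lam) (E := E) A.word)
  have hK : 0 ≤ K := (norm_nonneg _).trans ht
  have hle : (K + 1) * b ≤ (K + 1) ^ 2 * b :=
    mul_le_mul_of_nonneg_right (le_self_pow₀ (by linarith) two_ne_zero) (by linarith [h.one_le])
  intro x hx
  rw [Block.word_append, transferM_append]
  rcases hx with hx | hx
  · exact ((h x (Or.inl hx)).attach hsq ht).mono hle
  rcases suffix_append_cases hx with hx | ⟨s, hs, rfl⟩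
  · exact ((h x (Or.inl hx)).attach hsq ht).mono hle
  · rw [transferM_append, sq, mul_assoc]
    exact ((h s (Or.inr hs)).mul_left hsq ht).attach hsq ht

theorem SuffixBound.swap (h : SuffixBound lam E A B b)
    (ht : ‖(transferM lam E A.word).trace‖ ≤ K)
    (hz : ‖(transferM lam E A.word * transferM lam E B.word).trace‖ ≤ K) :
    SuffixBound lam E B A ((2 * K + 1) * b) := fun x hx =>
  (h x hx.symm).swap (mul_mul_eq_trace_smul (det_transferM _) (det_transferM _)) ht hz

theorem suffixBound_of_abs_le_one (hA : ∀ a ∈ A.word, |a| ≤ 1) (hB : ∀ a ∈ B.word, |a| ≤ 1)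
    (hK : ‖E‖ + |lam| + 1 ≤ K) :
    SuffixBound lam E A B ((K ^ (A.word.length + B.word.length)) ^ 4) := by
  have hK0 : 0 ≤ ‖E‖ + |lam| + 1 := by positivity
  have hK1 : 1 ≤ K := by linarith [norm_nonneg E, abs_nonneg lam]
  have hword {w : List ℝ} (hw : ∀ a ∈ w, |a| ≤ 1)
      (hlen : w.length ≤ A.word.length + B.word.length) :
      ‖transferM lam E w‖ ≤ K ^ (A.word.length + B.word.length) :=
    (norm_transferM_le hw).trans ((pow_le_pow_left₀ hK0 hK _).trans (pow_le_pow_right₀ hK1 hlen))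
  intro x hx
  refine AltBound.of_norm_le (one_le_pow₀ hK1) (hword hA (by omega)) (hword hB (by omega)) ?_
  rcases hx with hx | hx
  · exact hword (fun a ha => hA a (hx.subset ha)) (hx.length_le.trans (by omega))
  · exact hword (fun a ha => hB a (hx.subset ha)) (hx.length_le.trans (by omega))

theorem norm_trace_blockPair_fst_le {n : ℕ}
    (hn : ‖(transferM lam E (blockPair α n).1.word).trace‖ ≤ 2 ∨
      ‖(transferM lam E (blockPair α n).2.word).trace‖ ≤ 2)
    (hsucc : ‖(transferM lam E (blockPair α (n + 1)).1.word).trace‖ ≤ 2 ∨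
      ‖(transferM lam E (blockPair α (n + 1)).2.word).trace‖ ≤ 2) :
    ‖(transferM lam E (blockPair α n).1.word).trace‖ ≤ 14 + lam ^ 2 := by
  refine norm_trace_le_of_frickeVogt_eq (frickeVogt_blockPair lam E n) hn ?_
  rw [← transferM_append, ← Block.word_append]
  rw [blockPair, orderPair] at hsucc
  split_ifs at hsucc
  · exact hsucc
  · exact hsucc.symm

/-- The factor by which the growth bound increases from one block pair to the next. -/
def growthFactor (K : ℝ) : ℝ := (2 * K + 1) * (K + 1) ^ 2

theorem one_le_growthFactor (hK : 0 ≤ K) : 1 ≤ growthFactor K :=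
  one_le_mul_of_one_le_of_one_le (by linarith) (one_le_pow₀ (by linarith))

theorem suffixBound_blockPair_succ {n : ℕ}
    (h : SuffixBound lam E (blockPair α n).1 (blockPair α n).2 b)
    (hn : ‖(transferM lam E (blockPair α n).1.word).trace‖ ≤ c)
    (hsucc : ‖(transferM lam E (blockPair α (n + 1)).1.word).trace‖ ≤ c)
    (hcK : c ≤ K) (hK : 6 + 2 * c ^ 2 + lam ^ 2 ≤ K) :
    SuffixBound lam E (blockPair α (n + 1)).1 (blockPair α (n + 1)).2 (growthFactor K * b) := by
  have hfv := frickeVogt_blockPair lam E (α := α) n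
  have hK0 : 0 ≤ K := (norm_nonneg _).trans (hn.trans hcK)
  rw [growthFactor, mul_assoc]
  rw [blockPair, orderPair] at hsucc ⊢
  set A := (blockPair α n).1
  set B := (blockPair α n).2
  have happend := h.append (hn.trans hcK)
  split_ifs at hsucc ⊢
  · exact happend.mono (by nlinarith [happend.one_le])
  · refine happend.swap (hn.trans hcK) ((norm_trace_mul_le_of_frickeVogt_eq ?_ hn hsucc).trans hK)
    rw [Block.word_append, transferM_append, frickeVogt_mul_right (det_transferM _), hfv]

theorem suffixBound_blockPair_add {n₀ : ℕ}
    (h : SuffixBound lam E (blockPair α n₀).1 (blockPair α n₀).2 b)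
    (ht : ∀ n ≥ n₀, ‖(transferM lam E (blockPair α n).1.word).trace‖ ≤ 2 ∨
      ‖(transferM lam E (blockPair α n).2.word).trace‖ ≤ 2) (m : ℕ) :
    SuffixBound lam E (blockPair α (n₀ + m)).1 (blockPair α (n₀ + m)).2
      (growthFactor (6 + 2 * (14 + lam ^ 2) ^ 2 + lam ^ 2) ^ m * b) := by
  have hinner (n) (hn : n₀ ≤ n) := norm_trace_blockPair_fst_le (ht n hn) (ht (n + 1) (by omega))
  induction m with
  | zero => rwa [pow_zero, one_mul]
  | succ m ih =>
    rw [pow_succ', mul_assoc]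
    exact suffixBound_blockPair_succ ih (hinner _ (n₀.le_add_right m))
      (hinner _ (n₀.le_add_right (m + 1))) (by nlinarith [sq_nonneg lam]) le_rfl

theorem wordAt_infix_wordAt {y : ℝ} {i N m : ℕ} (h : i + N ≤ m) :
    wordAt α y N <:+: wordAt α (y - i * α) m := by
  obtain ⟨k, rfl⟩ := Nat.exists_eq_add_of_le h
  refine ⟨wordAt α (y - i * α) i, wordAt α (y - i * α + (i + N : ℕ) * α) k, ?_⟩
  rw [wordAt_add, wordAt_add, sub_add_cancel]

theorem IsBlockPair.norm_transferM_wordAt_le (h : IsBlockPair α A B)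
    (hb : SuffixBound lam E A B b) {N : ℕ} (hNA : N ≤ A.word.length) (hNB : N ≤ B.word.length)
    (y : ℝ) : ‖transferM lam E (wordAt α y N)‖ ≤ 3 * b ^ 4 := by
  obtain ⟨i, X, hX, Y, hY, hi, hread⟩ := h.exists_blocks_wordAt y
  have hNY : N ≤ Y.word.length := by rcases hY with rfl | rfl <;> assumption
  have hsuffix {Z : Block} (hZ : Z ∈ ({A, B} : Set Block)) (x : List ℝ) (hx : x <:+ Z.word) :
      ‖transferM lam E x‖ ≤ b :=
    (hb x (by rcases hZ with rfl | rfl <;> simp only [hx, true_or, or_true])).one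
  have hinfix : wordAt α y N <:+: X.word ++ Y.word := by
    rw [← hread]
    exact wordAt_infix_wordAt (by omega)
  refine (norm_transferM_infix_le (fun x hx => norm_transferM_suffix_append_le hb.one_le
    (hsuffix hX) (hsuffix hY) hx) hinfix).trans_eq ?_
  rw [← pow_mul]

end Growth

/-! ### Continued fractions and the lengths of the block pairs -/

section ContinuedFraction

variable {α : ℝ}

theorem irrational_cfGauss (hirr : Irrational α) (k : ℕ) : Irrational (cfGauss α k) := by
  induction k with
  | zero => exact hirr
  | succ k ih => exact (irrational_inv_iff.2 ih).sub_intCast _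

theorem cfGauss_mem_Ioo (hα : α ∈ Set.Ioo 0 1) (hirr : Irrational α) (k : ℕ) :
    cfGauss α k ∈ Set.Ioo 0 1 := by
  cases k with
  | zero => exact hα
  | succ k =>
    exact ⟨(Int.fract_nonneg _).lt_of_ne (irrational_cfGauss hirr (k + 1)).ne_zero.symm,
      Int.fract_lt_one _⟩

theorem one_le_cfCoeff_succ (hα : α ∈ Set.Ioo 0 1) (hirr : Irrational α) (k : ℕ) :
    1 ≤ cfCoeff α (k + 1) := by
  obtain ⟨hpos, hlt⟩ := cfGauss_mem_Ioo hα hirr k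
  exact Nat.le_floor (by rw [Nat.cast_one]; exact ((one_lt_inv₀ hpos).2 hlt).le)

theorem cfGauss_mul_cfCoeff_add (hα : α ∈ Set.Ioo 0 1) (hirr : Irrational α) (k : ℕ) :
    cfGauss α k * (cfCoeff α (k + 1) + cfGauss α (k + 1)) = 1 := by
  have hpos := (cfGauss_mem_Ioo hα hirr k).1
  rw [cfCoeff, Nat.add_sub_cancel, natCast_floor_eq_intCast_floor (inv_nonneg.2 hpos.le), cfGauss,
    Int.floor_add_fract, mul_inv_cancel₀ hpos.ne']

theorem exists_sum_cfCoeff_le (hbd : BoundedDensity α) :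
    ∃ D : ℕ, ∀ k, ∑ j ∈ Finset.Icc 1 (k + 1), cfCoeff α j ≤ D * (k + 1) := by
  obtain ⟨c, hc⟩ := hbd.bddAbove_range
  refine ⟨⌈c⌉₊, fun k => ?_⟩
  have hk := hc (Set.mem_range_self (k + 1))
  rw [one_div, inv_mul_le_iff₀ (by positivity), mul_comm] at hk
  exact_mod_cast hk.trans (mul_le_mul_of_nonneg_right (Nat.le_ceil c) (by positivity))

/-- The index of the block pair at which the `(k + 1)`-st division of the Euclidean algorithm is
completed, namely `a_1 + ⋯ + a_{k+1} - 1`. -/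
def cfLevel (α : ℝ) : ℕ → ℕ
  | 0 => cfCoeff α 1 - 1
  | k + 1 => cfLevel α k + cfCoeff α (k + 2)

theorem cfLevel_le_sum (k : ℕ) : cfLevel α k ≤ ∑ j ∈ Finset.Icc 1 (k + 1), cfCoeff α j := by
  induction k with
  | zero =>
    rw [zero_add, Finset.Icc_self, Finset.sum_singleton]
    exact Nat.sub_le _ _
  | succ k ih =>
    rw [Finset.sum_Icc_succ_top (by omega)]
    exact Nat.add_le_add_right ih _

theorem orderPair_eq_of_lt {A B : Block} (h : |A.shift| < |B.shift|) : orderPair A B = (A, B) :=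
  if_pos h

theorem blockPair_add_of_abs_shift_eq {A B : Block} (h : IsBlockPair α A B) {ρ : ℝ}
    (hρ : ρ ∈ Set.Ioo 0 |A.shift|) {n m : ℕ} (hn : blockPair α n = orderPair A B)
    (hB : |B.shift| = m * |A.shift| + ρ) :
    |(blockPair α (n + m)).1.shift| = ρ ∧ (blockPair α (n + m)).2 = A ∧
      (blockPair α (n + m)).1.word.length = B.word.length + m * A.word.length := by
  induction m generalizing n B with
  | zero =>
    rw [Nat.cast_zero, zero_mul, zero_add] at hB
    rw [add_zero, hn, orderPair, if_neg (by rw [hB]; exact hρ.2.not_gt), zero_mul, add_zero]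
    exact ⟨hB, rfl, rfl⟩
  | succ m ih =>
    have hlt : |A.shift| < |B.shift| := by
      rw [hB, Nat.cast_succ]
      nlinarith [hρ.1, abs_nonneg A.shift, (m.cast_nonneg : (0 : ℝ) ≤ m)]
    have hsucc : blockPair α (n + 1) = orderPair A (B ++ A) := by
      rw [blockPair, hn, orderPair_eq_of_lt hlt]
    have hBA : |(B ++ A).shift| = m * |A.shift| + ρ := by
      rw [h.abs_shift_append hlt, hB, Nat.cast_succ]
      ring
    rw [Nat.add_comm m, ← Nat.add_assoc, Nat.add_comm 1 m]
    obtain ⟨hshift, hsnd, hlen⟩ := ih (h.append hlt) hsucc hBA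
    refine ⟨hshift, hsnd, hlen.trans ?_⟩
    rw [Block.length_append]
    ring

theorem blockPair_cfLevel (hα : α ∈ Set.Ioo 0 1) (hirr : Irrational α) (k : ℕ) :
    |(blockPair α (cfLevel α k)).1.shift| =
        |(blockPair α (cfLevel α k)).2.shift| * cfGauss α (k + 1) ∧
      2 ^ ((k + 1) / 2) ≤ (blockPair α (cfLevel α k)).1.word.length ∧
      2 ^ (k / 2) ≤ (blockPair α (cfLevel α k)).2.word.length := by
  induction k with
  | zero =>
    have hgauss := cfGauss_mem_Ioo hα hirr 1
    have hcf : α * (cfCoeff α 1 + cfGauss α 1) = 1 := cfGauss_mul_cfCoeff_add hα hirr 0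
    have hdiv : |α - 1| = (cfCoeff α 1 - 1 : ℕ) * |α| + |α| * cfGauss α 1 := by
      rw [abs_of_neg (by linarith [hα.2]), abs_of_pos hα.1,
        Nat.cast_sub (one_le_cfCoeff_succ hα hirr 0), Nat.cast_one]
      linear_combination -hcf
    obtain ⟨hshift, hsnd, hlen⟩ := blockPair_add_of_abs_shift_eq (isBlockPair_zero_one hα)
      ⟨mul_pos (abs_pos.2 hα.1.ne') hgauss.1,
        mul_lt_of_lt_one_right (abs_pos.2 hα.1.ne') hgauss.2⟩ (n := 0) rfl hdiv
    rw [zero_add] at hshift hsnd hlen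
    rw [cfLevel, hshift, hsnd, hlen]
    exact ⟨rfl, Nat.le_add_right 1 _, le_rfl⟩
  | succ k ih =>
    obtain ⟨hratio, hfst, hsnd⟩ := ih
    obtain ⟨hpair, hlt⟩ := isBlockPair_blockPair hα hirr (cfLevel α k)
    have hgauss := cfGauss_mem_Ioo hα hirr (k + 2)
    set A := (blockPair α (cfLevel α k)).1
    set B := (blockPair α (cfLevel α k)).2
    have hA : 0 < |A.shift| := abs_pos.2 hpair.shift_ne_zero
    have hdiv : |B.shift| = cfCoeff α (k + 2) * |A.shift| + |A.shift| * cfGauss α (k + 2) := by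
      rw [hratio]
      linear_combination -|B.shift| * cfGauss_mul_cfCoeff_add hα hirr (k + 1)
    obtain ⟨hshift, hinner, hlen⟩ := blockPair_add_of_abs_shift_eq hpair
      ⟨mul_pos hA hgauss.1, mul_lt_of_lt_one_right hA hgauss.2⟩
      (orderPair_eq_of_lt hlt).symm hdiv
    rw [cfLevel, hshift, hinner, hlen]
    refine ⟨rfl, ?_, hfst⟩
    calc 2 ^ ((k + 2) / 2) = 2 ^ (k / 2) + 2 ^ (k / 2) := by
          rw [Nat.add_div_right k two_pos, pow_succ, mul_two]
      _ ≤ B.word.length + A.word.length :=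
          add_le_add hsnd ((Nat.pow_le_pow_right two_pos (by omega)).trans hfst)
      _ ≤ B.word.length + cfCoeff α (k + 2) * A.word.length :=
          Nat.add_le_add_left (Nat.le_mul_of_pos_left _ (one_le_cfCoeff_succ hα hirr (k + 1))) _

theorem le_length_blockPair_of_le {c m n : ℕ} (hmn : m ≤ n)
    (hm : c ≤ (blockPair α m).1.word.length ∧ c ≤ (blockPair α m).2.word.length) :
    c ≤ (blockPair α n).1.word.length ∧ c ≤ (blockPair α n).2.word.length := by
  induction n, hmn using Nat.le_induction with
  | base => exact hm
  | succ n _ ih =>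
    have hBA : c ≤ ((blockPair α n).2 ++ (blockPair α n).1).word.length := by
      rw [Block.length_append]
      exact ih.2.trans (Nat.le_add_right _ _)
    exact orderPair_induction (P := fun A B => c ≤ A.word.length ∧ c ≤ B.word.length)
      ⟨ih.1, hBA⟩ ⟨hBA, ih.1⟩

theorem two_pow_le_length_blockPair (hα : α ∈ Set.Ioo 0 1) (hirr : Irrational α) {j n : ℕ}
    (hn : cfLevel α (2 * j) ≤ n) :
    2 ^ j ≤ (blockPair α n).1.word.length ∧ 2 ^ j ≤ (blockPair α n).2.word.length := by
  obtain ⟨-, hfst, hsnd⟩ := blockPair_cfLevel hα hirr (2 * j)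
  rw [show (2 * j + 1) / 2 = j by omega] at hfst
  rw [Nat.mul_div_cancel_left j two_pos] at hsnd
  exact le_length_blockPair_of_le hn ⟨hfst, hsnd⟩

theorem exists_two_pow_le_length_blockPair (hα : α ∈ Set.Ioo 0 1) (hirr : Irrational α)
    (hbd : BoundedDensity α) :
    ∃ D : ℕ, ∀ j n, D * (j + 1) ≤ n →
      2 ^ j ≤ (blockPair α n).1.word.length ∧ 2 ^ j ≤ (blockPair α n).2.word.length := by
  obtain ⟨D, hD⟩ := exists_sum_cfCoeff_le hbd
  refine ⟨D * 2, fun j n hn => two_pow_le_length_blockPair hα hirr ?_⟩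
  calc cfLevel α (2 * j) ≤ D * (2 * j + 1) := (cfLevel_le_sum _).trans (hD _)
    _ ≤ D * 2 * (j + 1) := by rw [mul_assoc]; exact Nat.mul_le_mul_left D (by omega)
    _ ≤ n := hn

end ContinuedFraction

/-! ### Polynomial growth -/

section PolynomialGrowth

variable {α : ℝ} {A B : Block}

theorem IsBlockPair.neg_shift_mem_Icc (h : IsBlockPair α A B) {ℓ : ℝ} (hℓ : 0 < ℓ)
    (hB : ℓ ≤ B.word.length) (hmin : ℓ⁻¹ ≤ min α (1 - α)) :
    -A.shift ∈ Set.Icc (α - 1) α := by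
  have hBA : (B.word.length : ℝ) * |A.shift| ≤ 1 := by
    linarith [h.area_eq, mul_nonneg A.word.length.cast_nonneg (abs_nonneg B.shift)]
  have hA : |A.shift| ≤ min α (1 - α) :=
    ((le_inv_mul_iff₀ hℓ).2 ((mul_le_mul_of_nonneg_right hB (abs_nonneg _)).trans hBA)).trans
      (by rwa [mul_one])
  have hlow := (abs_le.1 (hA.trans (min_le_left _ _))).1
  have hup := (abs_le.1 (hA.trans (min_le_right _ _))).2
  constructor <;> linarith

theorem exists_forall_norm_trace_blockPair_le_two (hα : α ∈ Set.Ioo 0 1) (hirr : Irrational α) :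
    ∃ n₀, ∀ n ≥ n₀, ∀ {lam θ : ℝ} {H : lp (fun _ : ℤ => ℂ) 2 →L[ℂ] lp (fun _ : ℤ => ℂ) 2},
      IsSchrodinger lam (sturmian α θ) H → ∀ E ∈ spectrum ℂ H,
        ‖(transferM lam E (blockPair α n).1.word).trace‖ ≤ 2 ∨
          ‖(transferM lam E (blockPair α n).2.word).trace‖ ≤ 2 := by
  have hpos : 0 < min α (1 - α) := lt_min hα.1 (sub_pos.2 hα.2)
  obtain ⟨j, hj⟩ := pow_unbounded_of_one_lt (min α (1 - α))⁻¹ one_lt_two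
  have hmin : ((2 : ℝ) ^ j)⁻¹ ≤ min α (1 - α) := inv_le_of_inv_le₀ hpos hj.le
  refine ⟨cfLevel α (2 * j), fun n hn lam θ H hH E hE => ?_⟩
  obtain ⟨hpair, -⟩ := isBlockPair_blockPair hα hirr n
  obtain ⟨hfst, hsnd⟩ := two_pow_le_length_blockPair hα hirr hn
  exact hpair.norm_trace_le_two_or (Set.Ioo_subset_Icc_self hα)
    (hpair.neg_shift_mem_Icc (by positivity) (by exact_mod_cast hsnd) hmin)
    (hpair.symm.neg_shift_mem_Icc (by positivity) (by exact_mod_cast hfst) hmin) hH hE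

theorem exists_pow_log_add_two_le {G : ℝ} (hG : 1 ≤ G) :
    ∃ κ > 0, ∀ N > 0, G ^ (Nat.log 2 N + 2) ≤ (4 * N : ℝ) ^ κ := by
  obtain ⟨κ, hκ⟩ := pow_unbounded_of_one_lt G one_lt_two
  refine ⟨κ, Nat.pos_of_ne_zero ?_, fun N hN => ?_⟩
  · rintro rfl
    exact (hκ.trans_le (pow_zero _).le).not_ge hG
  have hN2 : (2 : ℝ) ^ Nat.log 2 N ≤ N := by exact_mod_cast Nat.pow_log_le_self 2 hN.ne'
  calc G ^ (Nat.log 2 N + 2) ≤ (2 ^ κ) ^ (Nat.log 2 N + 2) := by gcongr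
    _ = (4 * 2 ^ Nat.log 2 N) ^ κ := by rw [← pow_mul, mul_comm κ, pow_mul, pow_add]; ring
    _ ≤ (4 * N : ℝ) ^ κ := by gcongr

theorem exists_norm_transferM_wordAt_le (hα : α ∈ Set.Ioo 0 1) (hirr : Irrational α)
    (hbd : BoundedDensity α) (lam R : ℝ) (n₀ : ℕ) :
    ∃ C > (0 : ℝ), ∃ μ > 0, ∀ E : ℂ, ‖E‖ ≤ R →
      (∀ n ≥ n₀, ‖(transferM lam E (blockPair α n).1.word).trace‖ ≤ 2 ∨
        ‖(transferM lam E (blockPair α n).2.word).trace‖ ≤ 2) →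
      ∀ y, ∀ N > 0, ‖transferM lam E (wordAt α y N)‖ ≤ C * (N : ℝ) ^ (μ : ℕ) := by
  obtain ⟨D, hD⟩ := exists_two_pow_le_length_blockPair hα hirr hbd
  set G := growthFactor (6 + 2 * (14 + lam ^ 2) ^ 2 + lam ^ 2)
  have hG1 : 1 ≤ G := one_le_growthFactor (by positivity)
  obtain ⟨κ, hκ, hpow⟩ := exists_pow_log_add_two_le (one_le_pow₀ hG1 : 1 ≤ G ^ D)
  set b := ((max R 0 + |lam| + 1) ^
    ((blockPair α n₀).1.word.length + (blockPair α n₀).2.word.length)) ^ 4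
  refine ⟨3 * (4 ^ κ * b) ^ 4, by positivity, κ * 4, by omega, fun E hE ht y N hN => ?_⟩
  obtain ⟨hfst, hsnd⟩ := abs_le_one_of_mem_blockPair (α := α) n₀
  have hinit : SuffixBound lam E (blockPair α n₀).1 (blockPair α n₀).2 b :=
    suffixBound_of_abs_le_one hfst hsnd (by linarith [le_max_left R 0])
  have hbound := suffixBound_blockPair_add hinit ht (D * (Nat.log 2 N + 2))
  obtain ⟨hlen₁, hlen₂⟩ := hD (Nat.log 2 N + 1) _ (Nat.le_add_left _ n₀)
  have hN2 := (Nat.lt_pow_succ_log_self one_lt_two N).le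
  calc ‖transferM lam E (wordAt α y N)‖ ≤ 3 * (G ^ (D * (Nat.log 2 N + 2)) * b) ^ 4 :=
        (isBlockPair_blockPair hα hirr _).1.norm_transferM_wordAt_le hbound (hN2.trans hlen₁)
          (hN2.trans hlen₂) y
    _ ≤ 3 * ((4 * N) ^ κ * b) ^ 4 := by
        rw [pow_mul]
        gcongr
        exact hpow N hN
    _ = 3 * (4 ^ κ * b) ^ 4 * N ^ (κ * 4) := by rw [mul_pow 4 (N : ℝ), pow_mul]; ring

end PolynomialGrowth

end

end SturmianTransfer

theorem transfer_matrices_polynomially_bounded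
    (α : ℝ) (hirr : Irrational α) (hα : α ∈ Set.Ioo (0 : ℝ) 1) (hbd : BoundedDensity α)
    (lam : ℝ) (hlam : lam ≠ 0) :
    ∃ C > (0 : ℝ), ∃ μ > (0 : ℝ), ∀ θ ∈ Set.Ico (0 : ℝ) 1, ∀ θ' ∈ Set.Ico (0 : ℝ) 1,
      ∀ H : lp (fun _ : ℤ => ℂ) 2 →L[ℂ] lp (fun _ : ℤ => ℂ) 2,
        (∀ u : lp (fun _ : ℤ => ℂ) 2, ∀ n : ℤ,
      H u n = u (n + 1) + u (n - 1) + (lam * sturmian α θ' n : ℝ) * u n) →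
        ∀ E ∈ spectrum ℂ H, ∀ n : ℕ, 0 < n →
          opNorm (transferM lam E (sturmianWord α θ n)) ≤ C * (n : ℝ) ^ μ := by
  obtain ⟨n₀, htrace⟩ := SturmianTransfer.exists_forall_norm_trace_blockPair_le_two hα hirr
  obtain ⟨C, hC, μ, hμ, hbound⟩ :=
    SturmianTransfer.exists_norm_transferM_wordAt_le hα hirr hbd lam (2 + |lam|) n₀
  refine ⟨C, hC, μ, Nat.cast_pos.2 hμ, fun θ _ θ' _ H hH E hE n hn => ?_⟩
  have hE_norm : ‖E‖ ≤ 2 + |lam| :=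
    SturmianTransfer.IsSchrodinger.norm_le_of_mem_spectrum hH
      (SturmianTransfer.abs_sturmian_le_one θ') hE
  have htrace_E := fun m hm => htrace m hm hH E hE
  rw [SturmianTransfer.sturmianWord_eq_wordAt (Set.Ioo_subset_Icc_self hα), Real.rpow_natCast]
  exact hbound E hE_norm htrace_E _ n hn
end
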